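/- arXiv:2006.02880 — 2 statements merged into one kernel-verified Lean document; each statement's English description precedes it below -/
import Mathlib

section
/- Let κ and λ be infinite cardinals with κ < 𝔠 and κ ≤ λ ≤ 2^κ, where 𝔠 = 2^{ℵ₀}. Then there exist 2^λ mutually non-homeomorphic connected and locally connected Hausdorff spaces of cardinality κ and weight λ. In particular, up to homeomorphism there exist precisely 2^𝔠 countably infinite, connected, locally connected Hausdorff spaces, and precisely 𝔠 countably infinite, connected, locally connected, second countable Hausdorff spaces. -/
open Cardinal Set Topology

/-- The weight of a topological space: the least cardinality of a basis for its topology. -/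
noncomputable def tweight (X : Type) [TopologicalSpace X] : Cardinal :=
  sInf { c : Cardinal | ∃ B : Set (Set X), TopologicalSpace.IsTopologicalBasis B ∧ #B = c }

/-- A space is scattered if every nonempty subset has a point isolated in that subset. -/
def Scattered (X : Type) [TopologicalSpace X] : Prop :=
  ∀ S : Set X, S.Nonempty → ∃ x ∈ S, ∃ U : Set X, IsOpen U ∧ U ∩ S = {x}

/-- Strong zero-dimensionality: every closed set contained in an open set can be
separated from its complement by an open-closed set. -/
def StronglyZeroDimensional (X : Type) [TopologicalSpace X] : Prop :=
  ∀ A U : Set X, IsClosed A → IsOpen U → A ⊆ U →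
    ∃ V : Set X, IsOpen V ∧ IsClosed V ∧ A ⊆ V ∧ V ⊆ U

/-- A space is hereditarily paracompact if every subspace is paracompact. -/
def HereditarilyParacompact (X : Type) [TopologicalSpace X] : Prop :=
  ∀ S : Set X, ParacompactSpace S

/-- A space is perfectly normal iff it is normal and every closed set is a Gδ-set. -/
def PerfectlyNormal (X : Type) [TopologicalSpace X] : Prop :=
  NormalSpace X ∧ ∀ C : Set X, IsClosed C → IsGδ C

/-- A Hausdorff space is almost discrete iff the complement of some point is discrete. -/
def AlmostDiscrete (X : Type) [TopologicalSpace X] : Prop :=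
  T2Space X ∧ ∃ x : X, DiscreteTopology ({x}ᶜ : Set X)

/-- A space is almost metrizable iff it is perfectly normal and the complement of some
point is metrizable. -/
def AlmostMetrizable (X : Type) [TopologicalSpace X] : Prop :=
  PerfectlyNormal X ∧ ∃ x : X, TopologicalSpace.MetrizableSpace ({x}ᶜ : Set X)

/-- There is a family of `n` pairwise non-homeomorphic spaces, all with property `P`. -/
def ExistsNonHomeoFamily (n : Cardinal) (P : (X : Type) → TopologicalSpace X → Prop) : Prop :=
  ∃ (ι : Type) (F : ι → Type) (t : (i : ι) → TopologicalSpace (F i)),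
    #ι = n ∧ (∀ i, P (F i) (t i)) ∧
      ∀ i j, i ≠ j → IsEmpty (@Homeomorph (F i) (F j) (t i) (t j))

/-- Every family of pairwise non-homeomorphic spaces with property `P` has at most `n`
members. -/
def NonHomeoUpperBound (n : Cardinal) (P : (X : Type) → TopologicalSpace X → Prop) : Prop :=
  ∀ (ι : Type) (F : ι → Type) (t : (i : ι) → TopologicalSpace (F i)),
    (∀ i, P (F i) (t i)) →
    (∀ i j, i ≠ j → IsEmpty (@Homeomorph (F i) (F j) (t i) (t j))) → #ι ≤ n

/-- There are precisely `n` spaces with property `P`, up to homeomorphism. -/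
def PreciselyNonHomeo (n : Cardinal) (P : (X : Type) → TopologicalSpace X → Prop) : Prop :=
  ExistsNonHomeoFamily n P ∧ NonHomeoUpperBound n P

/-!
Given spaces `Y i`, each with a decreasing sequence `V i` of connected open sets that leaves a
neighbourhood of every point, and a filter `F` on the index set, attach a new base point whose
neighbourhoods contain a term of the sequences `V i`, uniformly in `i`, and all of `Y i` for
`F`-many `i`. The resulting wedge inherits connectedness, local connectedness and (if `F` contains
the cofinite sets) the Hausdorff property from the `Y i`. Its summands are the components of the
complement of the base point, so if they are pairwise non-homeomorphic, a homeomorphism of wedges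
that fixes the base point maps every summand to itself and therefore identifies the filters.

On `κ` indices there is an independent family of `λ ≤ 2 ^ κ` sets. Its subfamilies of size `λ`
generate `2 ^ λ` distinct filters of character `λ`, hence wedges of weight `λ`. A homeomorphism onto
a fixed wedge determines the filter as soon as the image of the base point is known, so every
homeomorphism type occurs at most `κ < 2 ^ λ` times.

The `κ` pairwise non-homeomorphic summands come from transfinite induction: every infinite `m < κ`
already yields `2 ^ m` of them. The induction starts with finite wedges of copies of a single
countable space without cut points, in which the base point is the only cut point and so the number
of summands is an invariant.
-/

universe u

/-! ### Weight and homeomorphism types -/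

theorem tweight_le_mk {X : Type} [TopologicalSpace X] {B : Set (Set X)}
    (hB : TopologicalSpace.IsTopologicalBasis B) : tweight X ≤ #B :=
  csInf_le' ⟨B, hB, rfl⟩

theorem exists_isTopologicalBasis_mk_eq_tweight (X : Type) [TopologicalSpace X] :
    ∃ B : Set (Set X), TopologicalSpace.IsTopologicalBasis B ∧ #B = tweight X :=
  csInf_mem (s := {c | ∃ B : Set (Set X), TopologicalSpace.IsTopologicalBasis B ∧ #B = c})
    ⟨_, _, TopologicalSpace.isTopologicalBasis_opens, rfl⟩

theorem secondCountableTopology_of_tweight_le_aleph0 {X : Type} [TopologicalSpace X]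
    (h : tweight X ≤ ℵ₀) : SecondCountableTopology X := by
  obtain ⟨B, hB, hBX⟩ := exists_isTopologicalBasis_mk_eq_tweight X
  exact hB.secondCountableTopology (le_aleph0_iff_set_countable.1 (hBX.trans_le h))

/-- Homeomorphism, as an equivalence relation on the spaces with property `P`; the cardinality of
its quotient is the number of homeomorphism types of such spaces. -/
def homeomorphSetoid (P : (X : Type) → TopologicalSpace X → Prop) :
    Setoid {X : Σ X : Type, TopologicalSpace X // P X.1 X.2} where
  r X Y := Nonempty (@Homeomorph X.1.1 Y.1.1 X.1.2 Y.1.2)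
  iseqv.refl X := ⟨@Homeomorph.refl _ X.1.2⟩
  iseqv.symm {X Y} := fun ⟨h⟩ ↦ ⟨@Homeomorph.symm _ _ X.1.2 Y.1.2 h⟩
  iseqv.trans {X Y Z} := fun ⟨h⟩ ⟨h'⟩ ↦ ⟨@Homeomorph.trans _ _ _ X.1.2 Y.1.2 Z.1.2 h h'⟩

section NonHomeoFamily

variable {P Q : (X : Type) → TopologicalSpace X → Prop} {n : Cardinal.{0}}

theorem ExistsNonHomeoFamily.mono (h : ExistsNonHomeoFamily n P) (hPQ : ∀ X t, P X t → Q X t) :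
    ExistsNonHomeoFamily n Q := by
  obtain ⟨ι, F, t, hι, hP, hne⟩ := h
  exact ⟨ι, F, t, hι, fun i ↦ hPQ _ _ (hP i), hne⟩

theorem existsNonHomeoFamily_iff_lift_le_mk :
    ExistsNonHomeoFamily n P ↔ lift.{1} n ≤ #(Quotient (homeomorphSetoid P)) := by
  constructor
  · rintro ⟨ι, F, t, rfl, hP, hne⟩
    let f (i : ι) : Quotient (homeomorphSetoid P) := ⟦⟨⟨F i, t i⟩, hP i⟩⟧
    have hf : f.Injective := fun i j hij ↦ by
      by_contra hij'
      exact not_isEmpty_iff.2 (Quotient.exact hij) (hne i j hij')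
    simpa using mk_le_of_injective (hf.comp ULift.down_injective)
  · induction n using Cardinal.inductionOn with | mk ι
    intro h
    obtain ⟨f⟩ := lift_mk_le'.1 (h.trans (lift_uzero _).ge)
    refine ⟨ι, fun i ↦ (f i).out.1.1, fun i ↦ (f i).out.1.2, rfl, fun i ↦ (f i).out.2,
      fun i j hij ↦ not_nonempty_iff.1 fun h ↦ hij (f.injective ?_)⟩
    exact Quotient.out_equiv_out.1 h

theorem existsNonHomeoFamily_of_forall_lt
    (h : ∀ m < n, ∃ k > m, ExistsNonHomeoFamily k P) : ExistsNonHomeoFamily n P := by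
  refine existsNonHomeoFamily_iff_lift_le_mk.2 (le_of_forall_lt fun m hm ↦ ?_)
  obtain ⟨m, rfl⟩ := mem_range_lift_of_le hm.le
  obtain ⟨k, hmk, hk⟩ := h m (lift_lt.1 hm)
  exact (lift_lt.2 hmk).trans_le (existsNonHomeoFamily_iff_lift_le_mk.1 hk)

theorem existsNonHomeoFamily_of_mk_homeomorph_le {α : Type} {c : Cardinal}
    (X : α → Type) [t : ∀ a, TopologicalSpace (X a)] (hP : ∀ a, P (X a) (t a)) (hc : ℵ₀ ≤ c)
    (hcα : c < #α) (hX : ∀ a, #{b // Nonempty (X b ≃ₜ X a)} ≤ c) : ExistsNonHomeoFamily #α P := by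
  rw [existsNonHomeoFamily_iff_lift_le_mk]
  let f (a : α) : Quotient (homeomorphSetoid P) := ⟦⟨⟨X a, t a⟩, hP a⟩⟧
  have hfiber (q) : lift.{1} #(f ⁻¹' {q}) ≤ lift.{1} c := by
    rw [lift_le]
    obtain hq | ⟨a, ha⟩ := (f ⁻¹' {q}).eq_empty_or_nonempty
    · simp [hq]
    · refine le_trans (mk_subtype_le_of_subset fun b hb ↦ ?_) (hX a)
      exact Quotient.exact (Eq.trans hb ha.symm)
  have hα : lift.{1} #α ≤ #(Quotient (homeomorphSetoid P)) * lift.{1} c := by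
    simpa using lift_mk_le_lift_mk_mul_of_lift_mk_preimage_le f hfiber
  have hα₀ : ℵ₀ ≤ lift.{1} #α := aleph0_le_lift.2 (hc.trans hcα.le)
  by_contra! hlt
  exact hα.not_gt (mul_lt_of_lt hα₀ hlt (lift_lt.2 hcα))

theorem nonHomeoUpperBound_of_coinduced_mem {α : Type} (S : Set (TopologicalSpace α))
    (hα : ∀ X t, P X t → Nonempty (X ≃ α))
    (hS : ∀ X t, P X t → ∀ e : X ≃ α, t.coinduced e ∈ S) : NonHomeoUpperBound #S P := by
  intro ι F t hP hne
  let e (i : ι) : F i ≃ α := (hα _ _ (hP i)).some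
  refine mk_le_of_injective (f := fun i ↦ (⟨_, hS _ _ (hP i) (e i)⟩ : S)) fun i j hij ↦ ?_
  have heq : (t i).coinduced (e i) = (t j).coinduced (e j) := congrArg Subtype.val hij
  by_contra hij'
  let _ := t i
  let _ := t j
  refine (hne i j hij').false (((e i).trans (e j).symm).toHomeomorph fun U ↦ ?_)
  calc IsOpen ((e i).trans (e j).symm ⁻¹' U)
    _ ↔ IsOpen[(t i).coinduced (e i)] ((e j).symm ⁻¹' U) := Iff.rfl
    _ ↔ IsOpen[(t j).coinduced (e j)] ((e j).symm ⁻¹' U) := by rw [heq]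
    _ ↔ IsOpen U := by rw [isOpen_coinduced, ← preimage_comp, (e j).symm_comp_self, preimage_id]

end NonHomeoFamily

theorem mk_topologicalSpace_le (α : Type*) : #(TopologicalSpace α) ≤ 2 ^ (2 : Cardinal) ^ #α := by
  rw [← mk_set, ← mk_set]
  exact mk_le_of_injective (f := fun t : TopologicalSpace α ↦ {U | IsOpen[t] U})
    fun _ _ h ↦ TopologicalSpace.ext h

theorem mk_setOf_countable_le (α : Type*) : #{s : Set α | s.Countable} ≤ max #α ℵ₀ ^ ℵ₀ := by
  simpa only [coe_ofPred, ← le_aleph0_iff_set_countable] using mk_bounded_set_le α ℵ₀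

theorem mk_setOf_secondCountableTopology_nat_le :
    #{t : TopologicalSpace ℕ | @SecondCountableTopology ℕ t} ≤ 𝔠 := by
  have hsub : {t : TopologicalSpace ℕ | @SecondCountableTopology ℕ t} ⊆
      TopologicalSpace.generateFrom '' {B : Set (Set ℕ) | B.Countable} := fun t ht ↦ by
    obtain ⟨B, hB, hBt⟩ := ht.is_open_generated_countable
    exact ⟨B, hB, hBt.symm⟩
  calc #{t : TopologicalSpace ℕ | @SecondCountableTopology ℕ t}
    _ ≤ #{B : Set (Set ℕ) | B.Countable} := (mk_le_mk_of_subset hsub).trans mk_image_le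
    _ ≤ max #(Set ℕ) ℵ₀ ^ ℵ₀ := mk_setOf_countable_le _
    _ = 𝔠 := by simp [aleph0_le_continuum]

/-! ### Wedges -/

/-- A decreasing sequence of connected open sets that leaves a neighbourhood of every point. Gluing
a new point to a space along such a sequence, as in `Wedge`, keeps it Hausdorff, connected and
locally connected. -/
structure IsEnd {X : Type*} [TopologicalSpace X] (V : ℕ → Set X) : Prop where
  antitone : Antitone V
  isOpen (n : ℕ) : IsOpen (V n)
  isConnected (n : ℕ) : IsConnected (V n)
  exists_notMem_closure (x : X) : ∃ n, x ∉ closure (V n)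

/-- The disjoint union of the spaces `Y i` together with a base point, whose neighbourhoods contain
`Y i` for `F`-many `i` and, uniformly in the other `i`, a term of the sequence `V i`. -/
inductive Wedge {ι : Type*} {Y : ι → Type*} (V : ∀ i, ℕ → Set (Y i)) (F : Filter ι)
  | base
  | of (i : ι) (y : Y i)

namespace Wedge

variable {ι : Type*} {Y : ι → Type*} {V : ∀ i, ℕ → Set (Y i)} {F : Filter ι}

theorem of_injective (i : ι) : Function.Injective (of i : Y i → Wedge V F) :=
  fun _ _ h ↦ by cases h; rfl

theorem eq_of_of_eq_of {i j : ι} {x : Y i} {y : Y j} (h : (of i x : Wedge V F) = of j y) :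
    i = j := by
  cases h; rfl

theorem disjoint_range_of {i j : ι} (hij : i ≠ j) :
    Disjoint (range (of i : Y i → Wedge V F)) (range (of j)) := by
  rw [disjoint_left]
  rintro _ ⟨x, rfl⟩ ⟨y, hy⟩
  exact hij (eq_of_of_eq_of hy).symm

theorem of_preimage_range_of {i j : ι} (hij : i ≠ j) :
    (of j : Y j → Wedge V F) ⁻¹' range (of i) = ∅ :=
  preimage_eq_empty (disjoint_range_of hij)

theorem of_preimage_image_of {i j : ι} (hij : i ≠ j) (s : Set (Y i)) :
    (of j : Y j → Wedge V F) ⁻¹' (of i '' s) = ∅ :=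
  subset_empty_iff.1 <| (preimage_mono (image_subset_range _ _)).trans (of_preimage_range_of hij).le

/-- The basic neighbourhoods of the base point of a wedge. -/
def baseNhd (V : ∀ i, ℕ → Set (Y i)) (F : Filter ι) (n : ℕ) (A : Set ι) : Set (Wedge V F)
  | base => True
  | of i y => i ∈ A ∨ y ∈ V i n

theorem base_mem_baseNhd (n : ℕ) (A : Set ι) : base ∈ baseNhd V F n A :=
  trivial

theorem of_mem_baseNhd {n : ℕ} {A : Set ι} {i : ι} {y : Y i} :
    of i y ∈ baseNhd V F n A ↔ i ∈ A ∨ y ∈ V i n :=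
  Iff.rfl

theorem baseNhd_subset_iff {n : ℕ} {A : Set ι} {U : Set (Wedge V F)} (hU : base ∈ U) :
    baseNhd V F n A ⊆ U ↔ (∀ i ∈ A, range (of i) ⊆ U) ∧ ∀ i, V i n ⊆ of i ⁻¹' U := by
  constructor
  · exact fun h ↦ ⟨fun i hi ↦ range_subset_iff.2 fun y ↦ h (Or.inl hi), fun i y hy ↦ h (Or.inr hy)⟩
  · rintro ⟨h₁, h₂⟩ (_ | ⟨i, y⟩) hx
    · exact hU
    · exact hx.elim (fun hi ↦ h₁ i hi ⟨y, rfl⟩) (fun hy ↦ h₂ i hy)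

theorem disjoint_image_of_baseNhd {n : ℕ} {i : ι} {s : Set (Y i)} (hs : Disjoint s (V i n)) :
    Disjoint (of i '' s) (baseNhd V F n {i}ᶜ) := by
  rw [disjoint_left]
  rintro _ ⟨y, hy, rfl⟩ (hi | hyV)
  · exact hi rfl
  · exact disjoint_left.1 hs hy hyV

variable [∀ i, TopologicalSpace (Y i)]

instance : TopologicalSpace (Wedge V F) where
  IsOpen U := (∀ i, IsOpen (of i ⁻¹' U)) ∧
    (base ∈ U → {i | range (of i) ⊆ U} ∈ F ∧ ∃ n, ∀ m ≥ n, ∀ i, V i m ⊆ of i ⁻¹' U)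
  isOpen_univ := by simp
  isOpen_inter U U' h h' := by
    refine ⟨fun i ↦ (h.1 i).inter (h'.1 i), fun hb ↦ ?_⟩
    obtain ⟨hA, n, hn⟩ := h.2 hb.1
    obtain ⟨hA', n', hn'⟩ := h'.2 hb.2
    refine ⟨by filter_upwards [hA, hA'] with i using subset_inter, max n n', fun m hm i ↦ ?_⟩
    exact subset_inter (hn m (le_of_max_le_left hm) i) (hn' m (le_of_max_le_right hm) i)
  isOpen_sUnion S hS := by
    refine ⟨fun i ↦ ?_, ?_⟩
    · rw [preimage_sUnion]
      exact isOpen_biUnion fun U hU ↦ (hS U hU).1 i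
    · rintro ⟨U, hU, hb⟩
      have hsub : U ⊆ ⋃₀ S := subset_sUnion_of_mem hU
      obtain ⟨hA, n, hn⟩ := (hS U hU).2 hb
      refine ⟨?_, n, fun m hm i ↦ (hn m hm i).trans (preimage_mono hsub)⟩
      filter_upwards [hA] with i hi using hi.trans hsub

theorem isOpenEmbedding_of (i : ι) : IsOpenEmbedding (of i : Y i → Wedge V F) := by
  refine .of_continuous_injective_isOpenMap ⟨fun U hU ↦ hU.1 i⟩ (of_injective i) fun s hs ↦ ?_
  refine ⟨fun j ↦ ?_, fun ⟨_, _, h⟩ ↦ nomatch h⟩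
  obtain rfl | hij := eq_or_ne i j
  · rwa [preimage_image_eq _ (of_injective i)]
  · simp [of_preimage_image_of hij]

theorem isOpen_baseNhd (hV : ∀ i, Antitone (V i)) (hVo : ∀ i n, IsOpen (V i n)) (n : ℕ)
    {A : Set ι} (hA : A ∈ F) : IsOpen (baseNhd V F n A) := by
  refine ⟨fun i ↦ ?_, fun _ ↦ ⟨?_, n, fun m hm i y hy ↦ Or.inr (hV i hm hy)⟩⟩
  · by_cases hi : i ∈ A
    · simp [preimage, of_mem_baseNhd, hi]
    · simpa [preimage, of_mem_baseNhd, hi] using hVo i n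
  · filter_upwards [hA] with i hi
    rintro _ ⟨y, rfl⟩
    exact Or.inl hi

theorem exists_baseNhd_subset {U : Set (Wedge V F)} (hU : IsOpen U) (hb : base ∈ U) :
    ∃ n, baseNhd V F n {i | range (of i) ⊆ U} ⊆ U := by
  obtain ⟨-, n, hn⟩ := hU.2 hb
  exact ⟨n, (baseNhd_subset_iff hb).2 ⟨fun i hi ↦ hi, hn n le_rfl⟩⟩

theorem isPreconnected_of_base_mem {s : Set (Wedge V F)} (hb : base ∈ s)
    (hs : ∀ i, IsPreconnected (of i ⁻¹' s)) (hV : ∀ i n, (of i ⁻¹' s ∩ V i n).Nonempty) :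
    IsPreconnected s := by
  refine isPreconnected_of_forall base fun x hx ↦ ?_
  obtain _ | ⟨i, y⟩ := x
  · exact ⟨{base}, singleton_subset_iff.2 hb, rfl, rfl, isPreconnected_singleton⟩
  let t : Set (Wedge V F) := of i '' (of i ⁻¹' s)
  have ht : IsPreconnected t := (hs i).image _ (isOpenEmbedding_of i).continuous.continuousOn
  have hbt : base ∈ closure t := by
    refine mem_closure_iff.2 fun U hU hbU ↦ ?_
    obtain ⟨n, hn⟩ := exists_baseNhd_subset hU hbU
    obtain ⟨y, hys, hy⟩ := hV i n
    exact ⟨of i y, hn (Or.inr hy), y, hys, rfl⟩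
  exact ⟨insert base t, insert_subset hb (image_preimage_subset _ _), mem_insert _ _,
    mem_insert_of_mem _ ⟨y, hx, rfl⟩,
    ht.subset_closure (subset_insert _ _) (insert_subset hbt subset_closure)⟩

theorem connectedSpace [∀ i, ConnectedSpace (Y i)] (hV : ∀ i n, (V i n).Nonempty) :
    ConnectedSpace (Wedge V F) :=
  connectedSpace_iff_univ.2 ⟨⟨base, trivial⟩, isPreconnected_of_base_mem trivial
    (fun _ ↦ isPreconnected_univ) fun i n ↦ by simpa using hV i n⟩

theorem isConnected_baseNhd [∀ i, ConnectedSpace (Y i)] (hV : ∀ i, IsEnd (V i)) (n : ℕ)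
    (A : Set ι) : IsConnected (baseNhd V F n A) := by
  refine ⟨⟨base, base_mem_baseNhd n A⟩, isPreconnected_of_base_mem (base_mem_baseNhd n A)
    (fun i ↦ ?_) fun i m ↦ ?_⟩
  · by_cases hi : i ∈ A
    · simpa [preimage, of_mem_baseNhd, hi] using isPreconnected_univ
    · simpa [preimage, of_mem_baseNhd, hi] using ((hV i).isConnected n).isPreconnected
  · obtain ⟨y, hy⟩ := ((hV i).isConnected (max n m)).nonempty
    exact ⟨y, Or.inr ((hV i).antitone (le_max_left n m) hy), (hV i).antitone (le_max_right n m) hy⟩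

theorem locallyConnectedSpace [∀ i, ConnectedSpace (Y i)] [∀ i, LocallyConnectedSpace (Y i)]
    (hV : ∀ i, IsEnd (V i)) : LocallyConnectedSpace (Wedge V F) := by
  refine locallyConnectedSpace_iff_subsets_isOpen_isConnected.2 fun x U hU ↦ ?_
  obtain ⟨U', hU'U, hU', hx⟩ := mem_nhds_iff.1 hU
  obtain _ | ⟨i, y⟩ := x
  · obtain ⟨n, hn⟩ := exists_baseNhd_subset hU' hx
    exact ⟨_, hn.trans hU'U, isOpen_baseNhd (fun i ↦ (hV i).antitone) (fun i ↦ (hV i).isOpen) n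
      (hU'.2 hx).1, base_mem_baseNhd _ _, isConnected_baseNhd hV _ _⟩
  · obtain ⟨s, hsU', hs, hy, hsc⟩ := locallyConnectedSpace_iff_subsets_isOpen_isConnected.1
      inferInstance y _ ((hU'.1 i).mem_nhds hx)
    exact ⟨of i '' s, (image_subset_iff.2 hsU').trans hU'U, (isOpenEmbedding_of i).isOpenMap s hs,
      ⟨y, hy, rfl⟩, hsc.image _ (isOpenEmbedding_of i).continuous.continuousOn⟩

theorem exists_isOpen_disjoint_baseNhd (hV : ∀ i, IsEnd (V i)) (i : ι) (y : Y i) :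
    ∃ (U : Set (Wedge V F)) (n : ℕ), IsOpen U ∧ of i y ∈ U ∧
      Disjoint U (baseNhd V F n {i}ᶜ) := by
  obtain ⟨n, hn⟩ := (hV i).exists_notMem_closure y
  exact ⟨of i '' (closure (V i n))ᶜ, n, (isOpenEmbedding_of i).isOpenMap _
    isClosed_closure.isOpen_compl, ⟨y, hn, rfl⟩,
    disjoint_image_of_baseNhd (disjoint_compl_left.mono_right subset_closure)⟩

theorem t2Space [∀ i, T2Space (Y i)] (hV : ∀ i, IsEnd (V i)) (hF : F ≤ Filter.cofinite) :
    T2Space (Wedge V F) := by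
  have hopen (n : ℕ) (i : ι) : IsOpen (baseNhd V F n {i}ᶜ) :=
    isOpen_baseNhd (fun i ↦ (hV i).antitone) (fun i ↦ (hV i).isOpen) n
      (Filter.le_cofinite_iff_compl_singleton_mem.1 hF i)
  refine ⟨fun x z hxz ↦ ?_⟩
  obtain _ | ⟨i, x⟩ := x <;> obtain _ | ⟨j, z⟩ := z
  · exact absurd rfl hxz
  · obtain ⟨U, n, hU, hzU, hdisj⟩ := exists_isOpen_disjoint_baseNhd (F := F) hV j z
    exact ⟨_, U, hopen n j, hU, base_mem_baseNhd _ _, hzU, hdisj.symm⟩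
  · obtain ⟨U, n, hU, hxU, hdisj⟩ := exists_isOpen_disjoint_baseNhd (F := F) hV i x
    exact ⟨U, _, hU, hopen n i, hxU, base_mem_baseNhd _ _, hdisj⟩
  · obtain rfl | hij := eq_or_ne i j
    · obtain ⟨U, U', hU, hU', hx, hz, hdisj⟩ := t2_separation (ne_of_apply_ne (of i) hxz)
      exact ⟨_, _, (isOpenEmbedding_of i).isOpenMap U hU, (isOpenEmbedding_of i).isOpenMap U' hU',
        ⟨x, hx, rfl⟩, ⟨z, hz, rfl⟩, (disjoint_image_iff (of_injective i)).2 hdisj⟩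
    · exact ⟨_, _, (isOpenEmbedding_of i).isOpen_range, (isOpenEmbedding_of j).isOpen_range,
        ⟨x, rfl⟩, ⟨z, rfl⟩, disjoint_range_of hij⟩

theorem isEnd_image_of (hV : ∀ i, Antitone (V i)) (hVo : ∀ i n, IsOpen (V i n))
    (hF : F ≤ Filter.cofinite) {i : ι} {W : ℕ → Set (Y i)} (hW : IsEnd W)
    (hVW : Disjoint (V i 0) (W 0)) : IsEnd fun n ↦ (of i '' W n : Set (Wedge V F)) where
  antitone m n hmn := image_mono (hW.antitone hmn)
  isOpen n := (isOpenEmbedding_of i).isOpenMap _ (hW.isOpen n)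
  isConnected n := (hW.isConnected n).image _ (isOpenEmbedding_of i).continuous.continuousOn
  exists_notMem_closure x := by
    simp only [mem_closure_iff, not_forall, not_nonempty_iff_eq_empty,
      ← disjoint_iff_inter_eq_empty]
    obtain _ | ⟨j, y⟩ := x
    · exact ⟨0, _, isOpen_baseNhd hV hVo 0 (Filter.le_cofinite_iff_compl_singleton_mem.1 hF i),
        base_mem_baseNhd _ _, (disjoint_image_of_baseNhd hVW.symm).symm⟩
    obtain rfl | hij := eq_or_ne i j
    · obtain ⟨n, hn⟩ := hW.exists_notMem_closure y
      exact ⟨n, of i '' (closure (W n))ᶜ, (isOpenEmbedding_of i).isOpenMap _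
        isClosed_closure.isOpen_compl, ⟨y, hn, rfl⟩, (disjoint_image_iff (of_injective i)).2
        (disjoint_compl_left.mono_right subset_closure)⟩
    · exact ⟨0, _, (isOpenEmbedding_of j).isOpen_range, ⟨y, rfl⟩,
        (disjoint_range_of hij).symm.mono_right (image_subset_range _ _)⟩

theorem hasBasis_of_isTopologicalBasis (hV : ∀ i, Antitone (V i)) (hVo : ∀ i n, IsOpen (V i n))
    (hVne : ∀ i, (V i 0)ᶜ.Nonempty) {B : Set (Set (Wedge V F))}
    (hB : TopologicalSpace.IsTopologicalBasis B) :
    F.HasBasis (fun b : B ↦ base ∈ b.1) fun b ↦ {i | range (of i) ⊆ b.1} := by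
  refine ⟨fun A ↦ ⟨fun hA ↦ ?_, fun ⟨b, hb, hbA⟩ ↦ ?_⟩⟩
  · obtain ⟨b, hbB, hb, hbA⟩ := hB.exists_subset_of_mem_open (base_mem_baseNhd 0 A)
      (isOpen_baseNhd hV hVo 0 hA)
    refine ⟨⟨b, hbB⟩, hb, fun i hi ↦ ?_⟩
    obtain ⟨y, hy⟩ := hVne i
    exact (of_mem_baseNhd.1 (hbA (hi ⟨y, rfl⟩))).resolve_right hy
  · exact Filter.mem_of_superset ((hB.isOpen b.2).2 hb).1 hbA

theorem isTopologicalBasis (hV : ∀ i, Antitone (V i)) (hVo : ∀ i n, IsOpen (V i n))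
    {B : ∀ i, Set (Set (Y i))} (hB : ∀ i, TopologicalSpace.IsTopologicalBasis (B i))
    {β : Type*} {s : β → Set ι} (hs : F.HasBasis (fun _ ↦ True) s) :
    TopologicalSpace.IsTopologicalBasis
      ((⋃ i, (of i '' ·) '' B i) ∪ range fun p : ℕ × β ↦ baseNhd V F p.1 (s p.2)) := by
  refine TopologicalSpace.isTopologicalBasis_of_isOpen_of_nhds ?_ fun x U hx hU ↦ ?_
  · rintro U (hU | ⟨p, rfl⟩)
    · obtain ⟨i, b, hb, rfl⟩ := mem_iUnion.1 hU
      exact (isOpenEmbedding_of i).isOpenMap b ((hB i).isOpen hb)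
    · exact isOpen_baseNhd hV hVo p.1 (hs.mem_of_mem trivial)
  obtain _ | ⟨i, y⟩ := x
  · obtain ⟨n, hn⟩ := exists_baseNhd_subset hU hx
    obtain ⟨b, -, hb⟩ := hs.mem_iff.1 (hU.2 hx).1
    refine ⟨_, Or.inr ⟨(n, b), rfl⟩, base_mem_baseNhd _ _, (baseNhd_subset_iff hx).2 ⟨?_, ?_⟩⟩
    exacts [hb, ((baseNhd_subset_iff hx).1 hn).2]
  · obtain ⟨b, hb, hyb, hbU⟩ := (hB i).exists_subset_of_mem_open (mem_preimage.2 hx) (hU.1 i)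
    exact ⟨_, Or.inl (mem_iUnion.2 ⟨i, b, hb, rfl⟩), ⟨y, hyb, rfl⟩, image_subset_iff.2 hbU⟩

theorem exists_subset_range_of {s : Set (Wedge V F)} (hs : IsConnected s) (hb : base ∉ s) :
    ∃ i, s ⊆ range (of i) := by
  obtain ⟨_ | ⟨i, y⟩, hx⟩ := hs.nonempty
  · exact absurd hx hb
  refine ⟨i, hs.isPreconnected.subset_left_of_subset_union (isOpenEmbedding_of i).isOpen_range
    (v := ⋃ j ≠ i, range (of j)) (isOpen_biUnion fun j _ ↦ (isOpenEmbedding_of j).isOpen_range)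
    (disjoint_iUnion₂_right.2 fun j hj ↦ disjoint_range_of hj.symm) ?_ ⟨_, hx, y, rfl⟩⟩
  rintro (_ | ⟨j, z⟩) hz
  · exact absurd hz hb
  · obtain rfl | hij := eq_or_ne j i
    · exact Or.inl ⟨z, rfl⟩
    · exact Or.inr (mem_iUnion₂.2 ⟨j, hij, z, rfl⟩)

theorem isConnected_range_of [∀ i, ConnectedSpace (Y i)] (i : ι) :
    IsConnected (range (of i : Y i → Wedge V F)) :=
  isConnected_range (isOpenEmbedding_of i).continuous

theorem not_isConnected_compl_base [Nontrivial ι] [∀ i, Nonempty (Y i)] :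
    ¬IsConnected ({base}ᶜ : Set (Wedge V F)) := fun h ↦ by
  obtain ⟨i, hi⟩ := exists_subset_range_of h fun h ↦ h rfl
  obtain ⟨j, hji⟩ := exists_ne i
  obtain ⟨y⟩ : Nonempty (Y j) := inferInstance
  obtain ⟨z, hz⟩ := @hi (of j y) fun h ↦ nomatch h
  exact hji (eq_of_of_eq_of hz).symm

theorem isPreconnected_compl_of (hV : ∀ i, IsEnd (V i)) [∀ i, ConnectedSpace (Y i)] {j : ι}
    {y : Y j} (hy : IsPreconnected ({y}ᶜ : Set (Y j))) :
    IsPreconnected ({of j y}ᶜ : Set (Wedge V F)) := by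
  refine isPreconnected_of_base_mem (fun h ↦ nomatch h) (fun i ↦ ?_) fun i n ↦ ?_ <;>
    obtain rfl | hij := eq_or_ne i j
  · rwa [preimage_compl, ← image_singleton, preimage_image_eq _ (of_injective i)]
  · rw [preimage_compl, ← image_singleton, of_preimage_image_of hij.symm, compl_empty]
    exact isPreconnected_univ
  · obtain ⟨m, hm⟩ := (hV i).exists_notMem_closure y
    obtain ⟨z, hz⟩ := ((hV i).isConnected (max m n)).nonempty
    refine ⟨z, fun h ↦ hm ?_, (hV i).antitone (le_max_right m n) hz⟩
    rw [← of_injective i h]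
    exact subset_closure ((hV i).antitone (le_max_left m n) hz)
  · obtain ⟨z, hz⟩ := ((hV i).isConnected n).nonempty
    exact ⟨z, fun h ↦ hij (eq_of_of_eq_of h), hz⟩

section Homeomorph

variable {ι' : Type*} {Y' : ι' → Type*} [∀ i, TopologicalSpace (Y' i)]
  {V' : ∀ i, ℕ → Set (Y' i)} {F' : Filter ι'}

theorem homeomorph_base_eq_base [∀ i, Nonempty (Y i)] [∀ i, ConnectedSpace (Y' i)]
    [Nontrivial ι] (hV' : ∀ i, IsEnd (V' i))
    (hY' : ∀ i, ∀ y : Y' i, IsPreconnected ({y}ᶜ : Set (Y' i)))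
    (h : Wedge V F ≃ₜ Wedge V' F') : h base = base := by
  rcases hb : h base with _ | ⟨j, y⟩
  · rfl
  refine absurd ⟨?_, ?_⟩ (not_isConnected_compl_base (V := V) (F := F))
  · obtain ⟨i⟩ : Nonempty ι := inferInstance
    obtain ⟨y⟩ : Nonempty (Y i) := inferInstance
    exact ⟨of i y, fun h ↦ nomatch h⟩
  · rw [← h.isPreconnected_image, image_compl_eq h.bijective, image_singleton, hb]
    exact isPreconnected_compl_of hV' (hY' j y)

theorem nonempty_homeomorph_of_image_range_of_eq (h : Wedge V F ≃ₜ Wedge V' F') {i : ι} {j : ι'}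
    (hij : h '' range (of i) = range (of j)) : Nonempty (Y i ≃ₜ Y' j) :=
  ⟨(isOpenEmbedding_of i).isEmbedding.toHomeomorph.trans <| (h.image _).trans <|
    (Homeomorph.setCongr hij).trans (isOpenEmbedding_of j).isEmbedding.toHomeomorph.symm⟩

variable [∀ i, ConnectedSpace (Y i)]

theorem exists_image_range_of_subset (h : Wedge V F ≃ₜ Wedge V' F') (hb : h base = base) (i : ι) :
    ∃ j, h '' range (of i) ⊆ range (of j) := by
  refine exists_subset_range_of ((isConnected_range_of i).image _ h.continuous.continuousOn) ?_
  rintro ⟨_, ⟨y, rfl⟩, hy⟩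
  exact nomatch h.injective (hy.trans hb.symm)

theorem exists_image_range_of_eq [∀ i, ConnectedSpace (Y' i)] (h : Wedge V F ≃ₜ Wedge V' F')
    (hb : h base = base) (i : ι) : ∃ j, h '' range (of i) = range (of j) := by
  obtain ⟨j, hj⟩ := exists_image_range_of_subset h hb i
  obtain ⟨i', hi'⟩ := exists_image_range_of_subset h.symm (h.symm_apply_eq.2 hb.symm) j
  rw [h.image_symm, preimage_subset_iff] at hi'
  obtain ⟨y⟩ : Nonempty (Y i) := inferInstance
  obtain ⟨z, hz⟩ := hi' _ (hj ⟨_, ⟨y, rfl⟩, rfl⟩)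
  obtain rfl := eq_of_of_eq_of hz
  exact ⟨j, hj.antisymm fun x hx ↦ ⟨h.symm x, hi' _ (by simpa using hx), h.apply_symm_apply x⟩⟩

theorem exists_injective_of_homeomorph [∀ i, ConnectedSpace (Y' i)] (h : Wedge V F ≃ₜ Wedge V' F')
    (hb : h base = base) : ∃ σ : ι → ι', σ.Injective := by
  choose σ hσ using exists_image_range_of_eq h hb
  refine ⟨σ, fun i j hij ↦ by_contra fun hne ↦ ?_⟩
  have hdisj : Disjoint (h '' range (of i)) (h '' range (of j)) :=
    (disjoint_image_iff h.injective).2 (disjoint_range_of hne)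
  rw [hσ i, hσ j, hij, disjoint_self] at hdisj
  exact (isConnected_range_of (σ j)).nonempty.ne_empty hdisj

end Homeomorph

theorem le_of_homeomorph {F' : Filter ι} (hV : ∀ i, Antitone (V i)) (hVo : ∀ i n, IsOpen (V i n))
    (hVne : ∀ i, (V i 0)ᶜ.Nonempty) (h : Wedge V F ≃ₜ Wedge V F') (hb : h base = base)
    (hi : ∀ i, h '' range (of i) = range (of i)) : F' ≤ F := by
  intro A hA
  obtain ⟨⟨U, hU⟩, hbU, hUA⟩ := (hasBasis_of_isTopologicalBasis hV hVo hVne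
    TopologicalSpace.isTopologicalBasis_opens).mem_iff.1 hA
  have hUF' := ((h.isOpenMap U hU).2 ⟨base, hbU, hb⟩).1
  filter_upwards [hUF'] with i hiU
  rw [← hi i] at hiU
  exact hUA ((image_subset_image_iff h.injective).1 hiU)

theorem filter_eq_of_homeomorph [∀ i, ConnectedSpace (Y i)] {F' : Filter ι}
    (hV : ∀ i, Antitone (V i)) (hVo : ∀ i n, IsOpen (V i n)) (hVne : ∀ i, (V i 0)ᶜ.Nonempty)
    (hY : ∀ i j, i ≠ j → IsEmpty (Y i ≃ₜ Y j)) (h : Wedge V F ≃ₜ Wedge V F')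
    (hb : h base = base) : F = F' := by
  have hi (i : ι) : h '' range (of i) = range (of i) := by
    obtain ⟨j, hj⟩ := exists_image_range_of_eq h hb i
    obtain rfl : i = j := by
      by_contra hij
      exact not_isEmpty_iff.2 (nonempty_homeomorph_of_image_range_of_eq h hj) (hY i j hij)
    exact hj
  refine (le_of_homeomorph hV hVo hVne h.symm (h.symm_apply_eq.2 hb.symm) fun i ↦ ?_).antisymm
    (le_of_homeomorph hV hVo hVne h hb hi)
  rw [h.image_symm, ← hi i, preimage_image_eq _ h.injective]

end Wedge

section Cardinality

variable {ι : Type u} {Y : ι → Type u} {V : ∀ i, ℕ → Set (Y i)} {F : Filter ι} {c : Cardinal.{u}}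

theorem mk_wedge_le (hc : ℵ₀ ≤ c) (hι : #ι ≤ c) (hY : ∀ i, #(Y i) ≤ c) : #(Wedge V F) ≤ c := by
  let f : Wedge V F → Option (Σ i, Y i)
    | .base => none
    | .of i y => some ⟨i, y⟩
  have hf : f.Injective := by rintro (_ | _) (_ | _) h <;> cases h <;> rfl
  have hsum : #(Σ i, Y i) ≤ c := calc
    #(Σ i, Y i) ≤ sum fun _ : ι ↦ c := by simpa only [mk_sigma] using Cardinal.sum_le_sum _ _ hY
    _ ≤ c := by simpa using (mul_le_mul_left hι c).trans (mul_eq_self hc).le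
  exact (mk_le_of_injective hf).trans (mk_option.trans_le (add_le_of_le hc hsum
    (one_le_aleph0.trans hc)))

theorem mk_le_mk_wedge [∀ i, Nonempty (Y i)] : #ι ≤ #(Wedge V F) :=
  mk_le_of_injective (f := fun i ↦ .of i (Classical.arbitrary (Y i)))
    fun _ _ h ↦ Wedge.eq_of_of_eq_of h

end Cardinality

theorem tweight_wedge_le {ι : Type} {Y : ι → Type} [∀ i, TopologicalSpace (Y i)]
    {V : ∀ i, ℕ → Set (Y i)} {F : Filter ι} (hV : ∀ i, Antitone (V i))
    (hVo : ∀ i n, IsOpen (V i n)) {c : Cardinal} (hc : ℵ₀ ≤ c) (hι : #ι ≤ c)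
    (hY : ∀ i, tweight (Y i) ≤ c) {β : Type} {s : β → Set ι} (hs : F.HasBasis (fun _ ↦ True) s)
    (hβ : #β ≤ c) : tweight (Wedge V F) ≤ c := by
  choose B hB hBY using fun i ↦ exists_isTopologicalBasis_mk_eq_tweight (Y i)
  refine (tweight_le_mk (Wedge.isTopologicalBasis hV hVo hB hs)).trans ((mk_union_le _ _).trans
    (add_le_of_le hc ?_ ?_))
  · calc #(⋃ i, (Wedge.of i '' ·) '' B i)
      _ ≤ sum fun i ↦ #((Wedge.of i '' ·) '' B i) := mk_iUnion_le_sum_mk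
      _ ≤ sum fun _ : ι ↦ c := Cardinal.sum_le_sum _ _ fun i ↦
        mk_image_le.trans ((hBY i).trans_le (hY i))
      _ ≤ c := by simpa using (mul_le_mul_left hι c).trans (mul_eq_self hc).le
  · calc #(range fun p : ℕ × β ↦ Wedge.baseNhd V F p.1 (s p.2))
      _ ≤ #(ℕ × β) := mk_range_le
      _ ≤ c := by simpa using (mul_le_mul' hc hβ).trans (mul_eq_self hc).le

/-! ### Independent families and their filters -/

section IndependentFamily

variable {ι Λ : Type*} {A : Λ → Set ι} {T : Set Λ}

/-- A strong form of independence of a family of sets: no member contains a finite intersection of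
other members, even up to a finite set. -/
def IsIndependent (A : Λ → Set ι) : Prop :=
  ∀ (s : Finset Λ) (t : Λ), t ∉ s → ((⋂ u ∈ s, A u) \ A t).Infinite

theorem exists_isIndependent {ι Λ : Type u} [Infinite ι] (h : #Λ ≤ 2 ^ #ι) :
    ∃ A : Λ → Set ι, IsIndependent A := by
  classical
  -- Hausdorff's construction, on the triples `(n, E, 𝒟)` instead of `ι`: a set `f t` of `ι` yields
  -- the triples with `E ∩ f t ∈ 𝒟`. Given `t` and finitely many other `u`, every triple where `E`
  -- distinguishes `f t` from the `f u` and `𝒟` consists of the traces `E ∩ f u` separates them.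
  obtain ⟨e⟩ : Nonempty (ℕ × Finset ι × Finset (Finset ι) ≃ ι) := by
    rw [← Cardinal.eq]
    simp
  obtain ⟨f⟩ : #Λ ≤ #(Set ι) := by rwa [mk_set]
  refine ⟨fun t ↦ e '' {q | q.2.1.filter (· ∈ f t) ∈ q.2.2}, fun s t hts ↦ ?_⟩
  have hdiff (u) (hu : u ∈ s) : ∃ x, ¬(x ∈ f u ↔ x ∈ f t) := by
    by_contra! hut
    exact hts (f.injective (Set.ext hut) ▸ hu)
  choose! x hx using hdiff
  let E := s.image x
  let 𝒟 := s.image fun u ↦ E.filter (· ∈ f u)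
  have h𝒟 (u) (hu : u ∈ s) : E.filter (· ∈ f u) ∈ 𝒟 := Finset.mem_image_of_mem _ hu
  have ht : E.filter (· ∈ f t) ∉ 𝒟 := fun h ↦ by
    obtain ⟨u, hu, hut⟩ := Finset.mem_image.1 h
    have hxE : x u ∈ E := Finset.mem_image_of_mem x hu
    exact hx u hu (by simpa [hxE] using Finset.ext_iff.1 hut (x u))
  refine infinite_of_injective_forall_mem (f := fun n : ℕ ↦ e (n, E, 𝒟)) (fun m n hmn ↦ by
    simpa using hmn) fun n ↦ ⟨mem_iInter₂.2 fun u hu ↦ ⟨_, h𝒟 u hu, rfl⟩, ?_⟩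
  rintro ⟨q, hq, hqe⟩
  obtain rfl := e.injective hqe
  exact ht hq

/-- The filter generated by the cofinite sets and the sets `A t` with `t ∈ T`. -/
def independentFilter (A : Λ → Set ι) (T : Set Λ) : Filter ι :=
  Filter.cofinite ⊓ ⨅ t : T, Filter.principal (A t)

theorem hasBasis_independentFilter : (independentFilter A T).HasBasis (fun _ ↦ True)
    fun p : Finset ι × Finset T ↦ (p.1 : Set ι)ᶜ ∩ ⋂ t ∈ p.2, A t := by
  refine Filter.HasBasis.to_hasBasis
    (Filter.hasBasis_cofinite.inf (Filter.hasBasis_iInf_principal_finite fun t : T ↦ A t)) ?_ ?_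
  · rintro ⟨E, s⟩ ⟨hE, hs⟩
    exact ⟨(hE.toFinset, hs.toFinset), trivial, by simp⟩
  · rintro ⟨E, s⟩ -
    exact ⟨(E, s), ⟨E.finite_toSet, s.finite_toSet⟩, by simp⟩

theorem exists_finset_forall_subset_imp_mem (hA : IsIndependent A) {B : Set ι}
    (hB : B ∈ independentFilter A T) : ∃ s : Finset T, ∀ t, B ⊆ A t → t ∈ s.map (.subtype _) := by
  obtain ⟨⟨E, s⟩, -, hEs⟩ := hasBasis_independentFilter.mem_iff.1 hB
  refine ⟨s, fun t hBt ↦ not_imp_comm.1 (hA (s.map (.subtype _)) t) ?_⟩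
  refine not_infinite.2 (E.finite_toSet.subset fun i ⟨hi, hit⟩ ↦ ?_)
  by_contra hiE
  exact hit (hBt (hEs ⟨hiE, by simpa using hi⟩))

theorem mem_independentFilter_iff (hA : IsIndependent A) {t : Λ} :
    A t ∈ independentFilter A T ↔ t ∈ T := by
  refine ⟨fun h ↦ ?_, fun ht ↦ ?_⟩
  · obtain ⟨s, hs⟩ := exists_finset_forall_subset_imp_mem hA h
    exact Finset.property_of_mem_map_subtype s (hs t Subset.rfl)
  · exact Filter.mem_inf_of_right (Filter.mem_iInf_of_mem ⟨t, ht⟩ (Filter.mem_principal_self _))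

theorem independentFilter_injective (hA : IsIndependent A) :
    Function.Injective (independentFilter A) := fun S T h ↦ by
  ext t
  rw [← mem_independentFilter_iff hA, h, mem_independentFilter_iff hA]

theorem mk_le_of_hasBasis_independentFilter {ι Λ β : Type u} {A : Λ → Set ι} {T : Set Λ}
    (hA : IsIndependent A) (hT : T.Infinite) {p : β → Prop} {s : β → Set ι}
    (h : (independentFilter A T).HasBasis p s) : #T ≤ #β := by
  have := hT.to_subtype
  choose f hf using fun b : {b // p b} ↦
    exists_finset_forall_subset_imp_mem hA (h.mem_of_mem b.2)
  have hcover : ⋃ b, (f b : Set T) = Set.univ := eq_univ_of_forall fun t ↦ by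
    obtain ⟨b, hb, hbt⟩ := h.mem_iff.1 ((mem_independentFilter_iff hA).2 t.2)
    exact mem_iUnion.2 ⟨⟨b, hb⟩, by simpa using hf ⟨b, hb⟩ t hbt⟩
  exact (le_range_of_union_finset_eq_univ f hcover).trans (mk_range_le.trans (mk_subtype_le p))

end IndependentFamily

theorem mk_setOf_mk_eq_mk (α : Type*) [Infinite α] : #{T : Set α | #T = #α} = 2 ^ #α := by
  refine ((mk_set_le _).trans_eq mk_set).antisymm ?_
  obtain ⟨e⟩ : Nonempty (α ⊕ α ≃ α) := by
    rw [← Cardinal.eq]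
    simp
  let f (S : Set α) : Set α := e '' (range Sum.inl ∪ Sum.inr '' S)
  have hf (S : Set α) : #(f S) = #α := by
    refine (mk_set_le _).antisymm (mk_le_of_injective (f := fun a ↦ ⟨e (.inl a), _, .inl ⟨a, rfl⟩,
      rfl⟩) fun a b h ↦ Sum.inl_injective (e.injective (congrArg Subtype.val h)))
  have hinj : f.Injective := fun S S' h ↦ by
    ext a
    simpa using Set.ext_iff.1 (e.injective.image_injective h) (Sum.inr a)
  rw [← mk_set]
  exact mk_le_of_injective (f := fun S ↦ (⟨f S, hf S⟩ : {T : Set α | #T = #α}))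
    fun S S' h ↦ hinj (congrArg Subtype.val h)

/-! ### A countable connected space without cut points -/

theorem isPreconnected_of_inter_closure_nonempty {X : Type*} [TopologicalSpace X] {s : Set X}
    (h : ∀ U V, IsOpen U → IsOpen V → (s ∩ U).Nonempty → (s ∩ V).Nonempty →
      (s ∩ (closure (s ∩ U) ∩ closure (s ∩ V))).Nonempty) : IsPreconnected s := by
  intro U V hU hV hs hsU hsV
  obtain ⟨z, hz, hzU, hzV⟩ := h U V hU hV hsU hsV
  obtain hz | hz := hs hz
  · obtain ⟨w, hwU, hws, hwV⟩ := mem_closure_iff.1 hzV U hU hz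
    exact ⟨w, hws, hwU, hwV⟩
  · obtain ⟨w, hwV, hws, hwU⟩ := mem_closure_iff.1 hzU V hV hz
    exact ⟨w, hws, hwU, hwV⟩

/-- The points of a countable Hausdorff space without isolated points which, like Roy's and Kirch's
examples, is connected and locally connected; see `ListSpace.instTopologicalSpace`. -/
structure ListSpace where
  /-- The list of natural numbers that encodes the point. -/
  toList : List ℕ

namespace ListSpace

instance : Countable ListSpace :=
  Function.Injective.countable (f := toList) fun ⟨_⟩ ⟨_⟩ h ↦ congrArg mk h

/-- The coordinates of a point: the entries of the list, followed by a strictly increasing sequence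
that determines the list. -/
def coord (l : ListSpace) (p : ℕ) : ℕ :=
  l.toList.getD p (Encodable.encode l.toList + p + 1)

theorem coord_of_length_le {l : ListSpace} {p : ℕ} (hp : l.toList.length ≤ p) :
    coord l p = Encodable.encode l.toList + p + 1 :=
  List.getD_eq_default _ _ hp

theorem exists_coord_eq (f : ℕ → ℕ) (n : ℕ) : ∃ l : ListSpace, ∀ p < n, coord l p = f p :=
  ⟨⟨(List.range n).map f⟩, fun p hp ↦ by simp [coord, hp]⟩

theorem exists_lt_coord (l : ListSpace) (k : ℕ) : ∃ p, k < coord l p := by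
  refine ⟨max l.toList.length k, ?_⟩
  rw [coord_of_length_le (le_max_left _ _)]
  lia

theorem exists_coord_ne {x y : ListSpace} (hxy : x ≠ y) :
    ∃ p, coord x p ≠ 0 ∧ coord y p ≠ 0 ∧ coord x p ≠ coord y p := by
  refine ⟨max x.toList.length y.toList.length, ?_⟩
  rw [coord_of_length_le (le_max_left _ _), coord_of_length_le (le_max_right _ _)]
  refine ⟨by lia, by lia, fun h ↦ hxy (congrArg mk (Encodable.encode_injective ?_))⟩
  lia

/-- The points whose coordinates agree with `v` at the finitely many places in `D`. -/
def cylinder (D : Finset ℕ) (v : ℕ → ℕ) : Set ListSpace :=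
  {l | ∀ p ∈ D, coord l p = v p}

theorem infinite_cylinder (D : Finset ℕ) (v : ℕ → ℕ) : (cylinder D v).Infinite := by
  obtain ⟨n, hn⟩ := D.exists_nat_subset_range
  choose l hl using fun k ↦ exists_coord_eq (fun p ↦ if p < n then v p else k) (n + 1)
  refine infinite_of_injective_forall_mem (f := l) (fun k m hkm ↦ ?_) fun k p hp ↦ ?_
  · simpa [hl] using congrArg (coord · n) hkm
  · have hpn := Finset.mem_range.1 (hn hp)
    simp [hl k p (by lia), hpn]

theorem cylinder_subset_cylinder {D E : Finset ℕ} (hDE : D ⊆ E) (v : ℕ → ℕ) :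
    cylinder E v ⊆ cylinder D v :=
  fun _ hl p hp ↦ hl p (hDE hp)

theorem disjoint_cylinder {D E : Finset ℕ} {v w : ℕ → ℕ} {p : ℕ} (hD : p ∈ D) (hE : p ∈ E)
    (hvw : v p ≠ w p) : Disjoint (cylinder D v) (cylinder E w) :=
  disjoint_left.2 fun _ h h' ↦ hvw ((h p hD).symm.trans (h' p hE))

/-- The topology induced by the coordinates from the countable power of the natural numbers with the
excluded point topology at `0`: only nonzero values of coordinates may be prescribed. A point with
vanishing coordinates is thus a limit of all kinds of sequences, which makes the space connected. -/
instance instTopologicalSpace : TopologicalSpace ListSpace where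
  IsOpen U := ∀ l ∈ U, ∃ D : Finset ℕ, (∀ p ∈ D, coord l p ≠ 0) ∧ cylinder D (coord l) ⊆ U
  isOpen_univ _ _ := ⟨∅, by simp, subset_univ _⟩
  isOpen_inter U V hU hV l hl := by
    obtain ⟨D, hD, hDU⟩ := hU l hl.1
    obtain ⟨E, hE, hEV⟩ := hV l hl.2
    refine ⟨D ∪ E, fun p hp ↦ (Finset.mem_union.1 hp).elim (hD p) (hE p), subset_inter ?_ ?_⟩
    · exact (cylinder_subset_cylinder Finset.subset_union_left _).trans hDU
    · exact (cylinder_subset_cylinder Finset.subset_union_right _).trans hEV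
  isOpen_sUnion S hS l := fun ⟨U, hU, hl⟩ ↦ by
    obtain ⟨D, hD, hDU⟩ := hS U hU l hl
    exact ⟨D, hD, hDU.trans (subset_sUnion_of_mem hU)⟩

theorem exists_cylinder_subset {U : Set ListSpace} (hU : IsOpen U) {l : ListSpace} (hl : l ∈ U) :
    ∃ D : Finset ℕ, (∀ p ∈ D, coord l p ≠ 0) ∧ cylinder D (coord l) ⊆ U :=
  hU l hl

theorem isOpen_cylinder {D : Finset ℕ} {v : ℕ → ℕ} (hv : ∀ p ∈ D, v p ≠ 0) :
    IsOpen (cylinder D v) :=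
  fun _ hl ↦ ⟨D, fun p hp ↦ (hl p hp).trans_ne (hv p hp),
    fun _ hm p hp ↦ (hm p hp).trans (hl p hp)⟩

theorem mem_closure_cylinder_sdiff {E : Finset ℕ} {v : ℕ → ℕ} {l : ListSpace}
    (hl : ∀ p ∈ E, coord l p = v p ∨ coord l p = 0) {s : Set ListSpace} (hs : s.Finite) :
    l ∈ closure (cylinder E v \ s) := by
  refine mem_closure_iff.2 fun U hU hlU ↦ ?_
  obtain ⟨D, hD, hDU⟩ := exists_cylinder_subset hU hlU
  let w (p : ℕ) : ℕ := if p ∈ E then v p else coord l p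
  have hwD (p) (hp : p ∈ D) : w p = coord l p := by
    by_cases hpE : p ∈ E
    · simp [w, hpE, (hl p hpE).resolve_right (hD p hp)]
    · simp [w, hpE]
  obtain ⟨m, hm, hms⟩ := ((infinite_cylinder (D ∪ E) w).sdiff hs).nonempty
  refine ⟨m, hDU fun p hp ↦ ?_, fun p hp ↦ ?_, hms⟩
  · rw [hm p (Finset.mem_union_left E hp), hwD p hp]
  · simp [hm p (Finset.mem_union_right D hp), w, hp]

theorem exists_forall_mem_closure_of_coord_eq_zero {D : Finset ℕ} {v : ℕ → ℕ} {s U : Set ListSpace}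
    (hs : s.Finite) (hU : IsOpen U) {x : ListSpace} (hx : x ∈ cylinder D v) (hxU : x ∈ U) :
    ∃ E : Finset ℕ, ∀ z ∈ cylinder D v, (∀ p ∈ E \ D, coord z p = 0) →
      z ∈ closure (cylinder D v \ s ∩ U) := by
  obtain ⟨E, -, hEU⟩ := exists_cylinder_subset hU hxU
  refine ⟨E, fun z hz hzE ↦ ?_⟩
  have hsub : cylinder (D ∪ E) (coord x) \ s ⊆ cylinder D v \ s ∩ U := fun y hy ↦
    ⟨⟨fun p hp ↦ (hy.1 p (Finset.mem_union_left E hp)).trans (hx p hp), hy.2⟩,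
      hEU (cylinder_subset_cylinder Finset.subset_union_right _ hy.1)⟩
  refine closure_mono hsub (mem_closure_cylinder_sdiff (fun p hp ↦ ?_) hs)
  by_cases hpD : p ∈ D
  · exact Or.inl ((hz p hpD).trans (hx p hpD).symm)
  · exact Or.inr (hzE p (Finset.mem_sdiff.2 ⟨(Finset.mem_union.1 hp).resolve_left hpD, hpD⟩))

theorem isConnected_cylinder_sdiff (D : Finset ℕ) (v : ℕ → ℕ) {s : Set ListSpace} (hs : s.Finite) :
    IsConnected (cylinder D v \ s) := by
  refine ⟨((infinite_cylinder D v).sdiff hs).nonempty,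
    isPreconnected_of_inter_closure_nonempty fun U U' hU hU' ⟨x, hx, hxU⟩ ⟨y, hy, hyU'⟩ ↦ ?_⟩
  obtain ⟨E, hE⟩ := exists_forall_mem_closure_of_coord_eq_zero hs hU hx.1 hxU
  obtain ⟨E', hE'⟩ := exists_forall_mem_closure_of_coord_eq_zero hs hU' hy.1 hyU'
  let w (p : ℕ) : ℕ := if p ∈ D then v p else 0
  obtain ⟨z, hz, hzs⟩ := ((infinite_cylinder (D ∪ E ∪ E') w).sdiff hs).nonempty
  have hzD : z ∈ cylinder D v := fun p hp ↦ (hz p (by simp [hp])).trans (if_pos hp)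
  have hz0 (p) (hp : p ∈ D ∪ E ∪ E') (hpD : p ∉ D) : coord z p = 0 := (hz p hp).trans (if_neg hpD)
  refine ⟨z, ⟨hzD, hzs⟩, hE z hzD fun p hp ↦ ?_, hE' z hzD fun p hp ↦ ?_⟩ <;>
    obtain ⟨hp, hpD⟩ := Finset.mem_sdiff.1 hp <;>
    exact hz0 p (by simp [hp]) hpD

theorem isConnected_cylinder (D : Finset ℕ) (v : ℕ → ℕ) : IsConnected (cylinder D v) := by
  simpa using isConnected_cylinder_sdiff D v finite_empty

theorem isPreconnected_compl_singleton (l : ListSpace) : IsPreconnected {l}ᶜ := by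
  simpa [cylinder, compl_eq_univ_sdiff] using
    (isConnected_cylinder_sdiff ∅ 0 (finite_singleton l)).isPreconnected

instance : ConnectedSpace ListSpace :=
  connectedSpace_iff_univ.2 (by simpa [cylinder] using isConnected_cylinder ∅ 0)

instance : LocallyConnectedSpace ListSpace :=
  locallyConnectedSpace_iff_subsets_isOpen_isConnected.2 fun l U hU ↦ by
    obtain ⟨U', hU'U, hU', hl⟩ := mem_nhds_iff.1 hU
    obtain ⟨D, hD, hDU'⟩ := exists_cylinder_subset hU' hl
    exact ⟨_, hDU'.trans hU'U, isOpen_cylinder hD, fun _ _ ↦ rfl, isConnected_cylinder D _⟩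

instance : T2Space ListSpace where
  t2 x y hxy := by
    obtain ⟨p, hx, hy, hp⟩ := exists_coord_ne hxy
    exact ⟨cylinder {p} (coord x), cylinder {p} (coord y), isOpen_cylinder (by simpa using hx),
      isOpen_cylinder (by simpa using hy), fun _ _ ↦ rfl, fun _ _ ↦ rfl,
      disjoint_cylinder (Finset.mem_singleton_self p) (Finset.mem_singleton_self p) hp⟩

theorem tweight_le : tweight ListSpace ≤ ℵ₀ := by
  let B : Set (Set ListSpace) :=
    {U | ∃ l D, (∀ p ∈ D, coord l p ≠ 0) ∧ cylinder D (coord l) = U}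
  have hB : TopologicalSpace.IsTopologicalBasis B := by
    refine TopologicalSpace.isTopologicalBasis_of_isOpen_of_nhds ?_ fun l U hl hU ↦ ?_
    · rintro _ ⟨l, D, hD, rfl⟩
      exact isOpen_cylinder hD
    · obtain ⟨D, hD, hDU⟩ := exists_cylinder_subset hU hl
      exact ⟨_, ⟨l, D, hD, rfl⟩, fun _ _ ↦ rfl, hDU⟩
  have hBc : B.Countable := by
    refine (countable_range fun q : ListSpace × Finset ℕ ↦ cylinder q.2 (coord q.1)).mono ?_
    rintro _ ⟨l, D, -, rfl⟩
    exact ⟨(l, D), rfl⟩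
  exact (tweight_le_mk hB).trans hBc.le_aleph0

theorem isEnd_cylinder {k : ℕ} (hk : k ≠ 0) :
    IsEnd fun n ↦ cylinder (Finset.range (n + 1)) fun _ ↦ k where
  antitone m n hmn := cylinder_subset_cylinder (Finset.range_mono (by lia)) _
  isOpen n := isOpen_cylinder fun _ _ ↦ hk
  isConnected n := isConnected_cylinder _ _
  exists_notMem_closure l := by
    obtain ⟨p, hp⟩ := exists_lt_coord l k
    have hdisj : Disjoint (cylinder {p} (coord l)) (cylinder (Finset.range (p + 1)) fun _ ↦ k) :=
      disjoint_cylinder (Finset.mem_singleton_self p) (Finset.self_mem_range_succ p) hp.ne'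
    have hopen : IsOpen (cylinder {p} (coord l)) := isOpen_cylinder (by simpa using hp.ne_bot)
    exact ⟨p, disjoint_left.1 (hdisj.closure_right hopen) fun _ _ ↦ rfl⟩

end ListSpace

/-! ### Counting wedges -/

/-- The spaces from which wedges are formed: connected, locally connected Hausdorff spaces with two
disjoint ends. A wedge is formed along one end, so that the other ends of its summands survive. -/
structure IsBlock (X : Type*) [TopologicalSpace X] : Prop where
  t2Space : T2Space X
  connectedSpace : ConnectedSpace X
  locallyConnectedSpace : LocallyConnectedSpace X
  exists_isEnd : ∃ V W : ℕ → Set X, IsEnd V ∧ IsEnd W ∧ Disjoint (V 0) (W 0)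

theorem isBlock_listSpace : IsBlock ListSpace where
  t2Space := inferInstance
  connectedSpace := inferInstance
  locallyConnectedSpace := inferInstance
  exists_isEnd := ⟨_, _, ListSpace.isEnd_cylinder one_ne_zero, ListSpace.isEnd_cylinder two_ne_zero,
    ListSpace.disjoint_cylinder (p := 0) (by simp) (by simp) (by simp)⟩

section Blocks

variable {ι : Type*} {Y : ι → Type*} [∀ i, TopologicalSpace (Y i)] {V W : ∀ i, ℕ → Set (Y i)}

theorem isBlock_wedge [Nontrivial ι] (hY : ∀ i, IsBlock (Y i)) (hV : ∀ i, IsEnd (V i))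
    (hW : ∀ i, IsEnd (W i)) (hVW : ∀ i, Disjoint (V i 0) (W i 0)) {F : Filter ι}
    (hF : F ≤ Filter.cofinite) : IsBlock (Wedge V F) where
  t2Space :=
    have := fun i ↦ (hY i).t2Space
    Wedge.t2Space hV hF
  connectedSpace :=
    have := fun i ↦ (hY i).connectedSpace
    Wedge.connectedSpace fun i n ↦ ((hV i).isConnected n).nonempty
  locallyConnectedSpace :=
    have := fun i ↦ (hY i).connectedSpace
    have := fun i ↦ (hY i).locallyConnectedSpace
    Wedge.locallyConnectedSpace hV
  exists_isEnd := by
    have hend (i : ι) : IsEnd fun n ↦ (Wedge.of i '' W i n : Set (Wedge V F)) :=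
      Wedge.isEnd_image_of (fun i ↦ (hV i).antitone) (fun i ↦ (hV i).isOpen) hF (hW i) (hVW i)
    obtain ⟨i, j, hij⟩ := exists_pair_ne ι
    exact ⟨_, _, hend i, hend j, (Wedge.disjoint_range_of hij).mono (image_subset_range _ _)
      (image_subset_range _ _)⟩

end Blocks

theorem existsNonHomeoFamily_aleph0_isBlock : ExistsNonHomeoFamily ℵ₀ fun X t ↦
    letI := t
    IsBlock X ∧ #X ≤ ℵ₀ ∧ tweight X ≤ ℵ₀ := by
  obtain ⟨V, W, hV, hW, hVW⟩ := isBlock_listSpace.exists_isEnd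
  let X (n : ℕ) : Type := Wedge (fun _ : Fin (n + 2) ↦ V) ⊥
  have hle (m n : ℕ) (h : X m ≃ₜ X n) : m ≤ n := by
    obtain ⟨σ, hσ⟩ := Wedge.exists_injective_of_homeomorph h
      (Wedge.homeomorph_base_eq_base (fun _ ↦ hV) (fun _ ↦ ListSpace.isPreconnected_compl_singleton)
        h)
    simpa using Fintype.card_le_of_injective σ hσ
  refine ⟨ℕ, X, fun _ ↦ inferInstance, mk_nat, fun n ↦ ⟨?_, ?_, ?_⟩, fun m n hmn ↦ ⟨fun h ↦ ?_⟩⟩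
  · exact isBlock_wedge (fun _ ↦ isBlock_listSpace) (fun _ ↦ hV) (fun _ ↦ hW) (fun _ ↦ hVW) bot_le
  · exact mk_wedge_le le_rfl mk_le_aleph0 fun _ ↦ mk_le_aleph0
  · exact tweight_wedge_le (fun _ ↦ hV.antitone) (fun _ ↦ hV.isOpen) le_rfl mk_le_aleph0
      (fun _ ↦ ListSpace.tweight_le) (Filter.principal_empty ▸ Filter.hasBasis_principal ∅)
      mk_le_aleph0
  · exact hmn ((hle m n h).antisymm (hle n m h.symm))

section IndependentWedge

variable {ι Λ : Type} {Y : ι → Type} [∀ i, TopologicalSpace (Y i)] {V : ∀ i, ℕ → Set (Y i)}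
  {A : Λ → Set ι} {T : Set Λ}

theorem tweight_wedge_independentFilter [Infinite ι] (hA : IsIndependent A)
    (hV : ∀ i, Antitone (V i)) (hVo : ∀ i n, IsOpen (V i n)) (hVne : ∀ i, (V i 0)ᶜ.Nonempty)
    (hY : ∀ i, tweight (Y i) ≤ #T) (hT : #ι ≤ #T) :
    tweight (Wedge V (independentFilter A T)) = #T := by
  have hT' : ℵ₀ ≤ #T := (aleph0_le_mk ι).trans hT
  have hTinf : T.Infinite := infinite_coe_iff.1 (infinite_iff.2 hT')
  have := hTinf.to_subtype
  refine le_antisymm ?_ ?_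
  · have hβ : #(Finset ι × Finset T) ≤ #T := by
      simpa using (mul_le_mul_left hT #T).trans (mul_eq_self hT').le
    exact tweight_wedge_le hV hVo hT' hT hY hasBasis_independentFilter hβ
  · obtain ⟨B, hB, hBX⟩ :=
      exists_isTopologicalBasis_mk_eq_tweight (Wedge V (independentFilter A T))
    rw [← hBX]
    exact mk_le_of_hasBasis_independentFilter hA hTinf
      (Wedge.hasBasis_of_isTopologicalBasis hV hVo hVne hB)

theorem mk_homeomorph_wedge_independentFilter_le [∀ i, ConnectedSpace (Y i)]
    (hA : IsIndependent A) (hV : ∀ i, Antitone (V i)) (hVo : ∀ i n, IsOpen (V i n))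
    (hVne : ∀ i, (V i 0)ᶜ.Nonempty) (hne : ∀ i j, i ≠ j → IsEmpty (Y i ≃ₜ Y j)) :
    #{S // Nonempty (Wedge V (independentFilter A S) ≃ₜ Wedge V (independentFilter A T))} ≤
      #(Wedge V (independentFilter A T)) := by
  let h (S : {S //
      Nonempty (Wedge V (independentFilter A S) ≃ₜ Wedge V (independentFilter A T))}) := S.2.some
  refine mk_le_of_injective (f := fun S ↦ h S Wedge.base) fun S S' hSS' ↦ ?_
  exact Subtype.ext (independentFilter_injective hA (Wedge.filter_eq_of_homeomorph hV hVo hVne hne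
    ((h S).trans (h S').symm) ((h S').symm_apply_eq.2 hSS')))

end IndependentWedge

theorem existsNonHomeoFamily_two_pow_isBlock {κ lam : Cardinal} (hκ : ℵ₀ ≤ κ) (h₁ : κ ≤ lam)
    (h₂ : lam ≤ 2 ^ κ)
    (h : ExistsNonHomeoFamily κ fun X t ↦ letI := t; IsBlock X ∧ #X ≤ κ ∧ tweight X ≤ κ) :
    ExistsNonHomeoFamily (2 ^ lam) fun X t ↦ letI := t; IsBlock X ∧ #X = κ ∧ tweight X = lam := by
  obtain ⟨ι, Y, t, rfl, hY, hne⟩ := h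
  induction lam using Cardinal.inductionOn with | mk Λ
  have : Infinite ι := infinite_iff.2 hκ
  have : Infinite Λ := infinite_iff.2 (hκ.trans h₁)
  have := fun i ↦ (hY i).1.connectedSpace
  obtain ⟨A, hA⟩ := exists_isIndependent h₂
  choose V W hV hW hVW using fun i ↦ (hY i).1.exists_isEnd
  have hVo (i n) : IsOpen (V i n) := (hV i).isOpen n
  have hVa (i) : Antitone (V i) := (hV i).antitone
  have hVne (i) : (V i 0)ᶜ.Nonempty :=
    ((hW i).isConnected 0).nonempty.mono (hVW i).subset_compl_left
  let X (T : {T : Set Λ | #T = #Λ}) : Type := Wedge V (independentFilter A T)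
  have hX (T) : #(X T) ≤ #ι := mk_wedge_le hκ le_rfl fun i ↦ (hY i).2.1
  rw [← mk_setOf_mk_eq_mk]
  refine existsNonHomeoFamily_of_mk_homeomorph_le X (fun T ↦ ⟨?_, ?_, ?_⟩) hκ ?_ fun T ↦ ?_
  · exact isBlock_wedge (fun i ↦ (hY i).1) hV hW hVW inf_le_left
  · exact (hX T).antisymm mk_le_mk_wedge
  · have hT : #ι ≤ #T.1 := h₁.trans_eq T.2.symm
    exact (tweight_wedge_independentFilter hA hVa hVo hVne (fun i ↦ (hY i).2.2.trans hT) hT).trans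
      T.2
  · rw [mk_setOf_mk_eq_mk]
    exact h₁.trans_lt (cantor _)
  · let f (S : {S // Nonempty (X S ≃ₜ X T)}) :
        {S // Nonempty (Wedge V (independentFilter A S) ≃ₜ Wedge V (independentFilter A T))} :=
      ⟨S.1, S.2⟩
    have hf : f.Injective := fun S S' h ↦
      have hSS' : (f S).1 = (f S').1 := congrArg Subtype.val h
      Subtype.ext (Subtype.ext hSS')
    exact (mk_le_of_injective hf).trans
      ((mk_homeomorph_wedge_independentFilter_le hA hVa hVo hVne hne).trans (hX T))

theorem existsNonHomeoFamily_isBlock (κ : Cardinal) (hκ : ℵ₀ ≤ κ) :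
    ExistsNonHomeoFamily κ fun X t ↦ letI := t; IsBlock X ∧ #X ≤ κ ∧ tweight X ≤ κ := by
  induction κ using WellFoundedLT.induction with | ind κ ih
  obtain rfl | hκ' := hκ.eq_or_lt
  · exact existsNonHomeoFamily_aleph0_isBlock
  refine existsNonHomeoFamily_of_forall_lt fun m hm ↦ ?_
  have hlt : max m ℵ₀ < κ := max_lt hm hκ'
  refine ⟨2 ^ max m ℵ₀, (le_max_left _ _).trans_lt (cantor _), ?_⟩
  refine (existsNonHomeoFamily_two_pow_isBlock (le_max_right m ℵ₀) le_rfl (cantor _).le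
    (ih _ hlt (le_max_right m ℵ₀))).mono fun X t ⟨hX, hcard, hweight⟩ ↦ ?_
  exact ⟨hX, hcard.trans_le hlt.le, hweight.trans_le hlt.le⟩

theorem existsNonHomeoFamily_two_pow {κ lam : Cardinal} (hκ : ℵ₀ ≤ κ) (h₁ : κ ≤ lam)
    (h₂ : lam ≤ 2 ^ κ) : ExistsNonHomeoFamily (2 ^ lam) fun X t ↦
      letI := t
      T2Space X ∧ ConnectedSpace X ∧ LocallyConnectedSpace X ∧ #X = κ ∧ tweight X = lam :=
  (existsNonHomeoFamily_two_pow_isBlock hκ h₁ h₂ (existsNonHomeoFamily_isBlock κ hκ)).mono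
    fun _ _ ⟨hX, hcard, hweight⟩ ↦
      ⟨hX.t2Space, hX.connectedSpace, hX.locallyConnectedSpace, hcard, hweight⟩

theorem nonHomeoUpperBound_two_pow_continuum {P : (X : Type) → TopologicalSpace X → Prop}
    (hP : ∀ X t, P X t → #X = ℵ₀) : NonHomeoUpperBound (2 ^ 𝔠) P := by
  have h := nonHomeoUpperBound_of_coinduced_mem (α := ℕ) (P := P) Set.univ
    (fun X t hX ↦ Cardinal.eq.1 ((hP X t hX).trans mk_nat.symm)) fun _ _ _ _ ↦ mem_univ _
  exact fun ι F t hF hne ↦ (h ι F t hF hne).trans (by simpa using mk_topologicalSpace_le ℕ)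

theorem nonHomeoUpperBound_continuum {P : (X : Type) → TopologicalSpace X → Prop}
    (hP : ∀ X t, P X t → #X = ℵ₀) (hP' : ∀ X t, P X t → @SecondCountableTopology X t) :
    NonHomeoUpperBound 𝔠 P := by
  have h := nonHomeoUpperBound_of_coinduced_mem (α := ℕ) (P := P)
    {t | @SecondCountableTopology ℕ t}
    (fun X t hX ↦ Cardinal.eq.1 ((hP X t hX).trans mk_nat.symm)) fun X t hX e ↦ ?_
  · exact fun ι F t hF hne ↦ (h ι F t hF hne).trans mk_setOf_secondCountableTopology_nat_le
  · have := hP' X t hX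
    rw [← e.induced_symm]
    exact TopologicalSpace.secondCountableTopology_induced ℕ X e.symm

theorem stmt13_general (κ lam : Cardinal) (hκ : ℵ₀ ≤ κ) (h₁ : κ ≤ lam) (h₂ : lam ≤ 2 ^ κ) :
    ExistsNonHomeoFamily (2 ^ lam) (fun X t =>
      letI := t
      T2Space X ∧ ConnectedSpace X ∧ LocallyConnectedSpace X ∧
        #X = κ ∧ tweight X = lam)
    ∧ PreciselyNonHomeo ((2 : Cardinal) ^ Cardinal.continuum) (fun X t =>
        letI := t
        T2Space X ∧ ConnectedSpace X ∧ LocallyConnectedSpace X ∧ #X = ℵ₀)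
    ∧ PreciselyNonHomeo Cardinal.continuum (fun X t =>
        letI := t
        T2Space X ∧ ConnectedSpace X ∧ LocallyConnectedSpace X ∧
          SecondCountableTopology X ∧ #X = ℵ₀) := by
  refine ⟨existsNonHomeoFamily_two_pow hκ h₁ h₂, ⟨?_, ?_⟩, ⟨?_, ?_⟩⟩
  · exact (existsNonHomeoFamily_two_pow le_rfl aleph0_le_continuum two_power_aleph0.ge).mono
      fun _ _ ⟨hT2, hconn, hloc, hcard, _⟩ ↦ ⟨hT2, hconn, hloc, hcard⟩
  · exact nonHomeoUpperBound_two_pow_continuum fun _ _ hX ↦ hX.2.2.2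
  · rw [← two_power_aleph0]
    exact (existsNonHomeoFamily_two_pow le_rfl le_rfl (cantor _).le).mono
      fun _ _ ⟨hT2, hconn, hloc, hcard, hweight⟩ ↦
        ⟨hT2, hconn, hloc, secondCountableTopology_of_tweight_le_aleph0 hweight.le, hcard⟩
  · exact nonHomeoUpperBound_continuum (fun _ _ hX ↦ hX.2.2.2.2) fun _ _ hX ↦ hX.2.2.2.1

/-- Theorem 3: if `κ < 𝔠` and `κ ≤ λ ≤ 2 ^ κ` (with `κ, λ` infinite), then there exist
`2 ^ λ` mutually non-homeomorphic connected, locally connected Hausdorff spaces of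
cardinality `κ` and weight `λ`.  In particular there exist precisely `2 ^ 𝔠` countably
infinite connected, locally connected Hausdorff spaces up to homeomorphism, and
precisely `𝔠` countably infinite connected, locally connected, second countable
Hausdorff spaces up to homeomorphism. -/
theorem stmt13 (κ lam : Cardinal) (hκ : ℵ₀ ≤ κ) (hc : κ < Cardinal.continuum)
    (h1 : κ ≤ lam) (h2 : lam ≤ 2 ^ κ) :
    ExistsNonHomeoFamily (2 ^ lam) (fun X t =>
      letI := t
      T2Space X ∧ ConnectedSpace X ∧ LocallyConnectedSpace X ∧
        #X = κ ∧ tweight X = lam)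
    ∧ PreciselyNonHomeo ((2 : Cardinal) ^ Cardinal.continuum) (fun X t =>
        letI := t
        T2Space X ∧ ConnectedSpace X ∧ LocallyConnectedSpace X ∧ #X = ℵ₀)
    ∧ PreciselyNonHomeo Cardinal.continuum (fun X t =>
        letI := t
        T2Space X ∧ ConnectedSpace X ∧ LocallyConnectedSpace X ∧
          SecondCountableTopology X ∧ #X = ℵ₀) := by
  exact stmt13_general κ lam hκ h1 h2
end

section
/- Let κ and λ be cardinals with 𝔠 ≤ κ ≤ λ ≤ 2^κ, where 𝔠 = 2^{ℵ₀}. Then there exist 2^λ mutually non-homeomorphic connected, totally pathwise disconnected, nowhere locally connected, almost metrizable topological spaces of cardinality κ and weight λ. -/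
open Cardinal Set Topology

/-- A space is totally pathwise disconnected iff every continuous map from `[0,1]` into
it is constant. -/
def TotallyPathDisconnected (X : Type) [TopologicalSpace X] : Prop :=
  ∀ f : unitInterval → X, Continuous f → ∀ s t, f s = f t

/-- A space is nowhere locally connected iff every point has a neighborhood containing
no connected neighborhood of that point. -/
def NowhereLocallyConnected (X : Type) [TopologicalSpace X] : Prop :=
  ∀ x : X, ∃ U ∈ nhds x, ∀ V ∈ nhds x, IsConnected V → ¬ V ⊆ U

/-
Fix a set `A` of cardinality `κ`, well-ordered and discrete, and a function `f : ℝ → ℝ` whose graph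
over every interval is connected but contains no nonconstant path. Antitone sequences in `A` are
eventually constant, and they form a totally disconnected metrizable space on which the eventual
value behaves like a Cantor–Bendixson rank, hence is preserved by every homeomorphism. Put a copy of
the graph of `f` over each antitone sequence, keeping only the part over the positive half-line when
the sequence is not constant, and add one point at infinity: all right ends of the sheets converge
to it, while the left ends, which are indexed by `A`, approach it along a filter `G` on `A`.

The right ends make the space connected, and its weight is the character of `G`. If that character
is uncountable, then a homeomorphism of two such spaces fixes the point at infinity, permutes the
sheets, and preserves the eventual value of the sequence below each sheet; connectedness of the
sheets forces the left end of a full sheet to be the image of an end of a full sheet with the same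
value, so the two filters coincide. Finally, an independent family of `λ` subsets of `A` generates
`2 ^ λ` distinct filters of character `λ`.
-/

open Filter

universe u

section Selection

theorem exists_injective_forall_mem {ι α : Type u} (S : ι → Set α) (hS : ∀ i, #ι ≤ #(S i)) :
    ∃ g : ι → α, Function.Injective g ∧ ∀ i, g i ∈ S i := by
  obtain ⟨r, wo, hr⟩ := Cardinal.exists_ord_eq ι
  have avoid (i : ι) (g : {j // r j i} → α) : ∃ a ∈ S i, a ∉ range g := by
    refine not_subset.1 fun hsub => (hS i).not_gt ?_
    calc #(S i) ≤ #(range g) := mk_le_mk_of_subset hsub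
      _ ≤ #{j // r j i} := mk_range_le
      _ < #ι := Cardinal.card_typein_lt (r := r) i hr
  choose F hFmem hFavoid using avoid
  let g : ι → α := wo.wf.fix fun i ih => F i fun j => ih j.1 j.2
  have hg (i : ι) : g i = F i fun j => g j.1 := wo.wf.fix_eq _ i
  have hne {i j : ι} (hji : r j i) : g j ≠ g i := fun h =>
    hFavoid i (fun k => g k.1) ⟨⟨j, hji⟩, h.trans (hg i)⟩
  refine ⟨g, fun i j hij => ?_, fun i => hg i ▸ hFmem i _⟩
  rcases trichotomous_of r i j with h | h | h
  · exact absurd hij (hne h)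
  · exact h
  · exact absurd hij.symm (hne h)

theorem mk_isClosed_le_continuum (X : Type u) [TopologicalSpace X] [SecondCountableTopology X] :
    #{K : Set X // IsClosed K} ≤ 𝔠 := by
  let B := TopologicalSpace.countableBasis X
  have hB := TopologicalSpace.isBasis_countableBasis X
  calc #{K : Set X // IsClosed K} ≤ #{s // @MeasurableSet X (.generateFrom B) s} := by
        refine mk_subtype_mono fun K hK => ?_
        rw [← hB.borel_eq_generateFrom]
        exact (MeasurableSpace.measurableSet_generateFrom hK.isOpen_compl).of_compl
    _ ≤ 𝔠 := MeasurableSpace.cardinal_measurableSet_le_continuum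
      ((mk_le_aleph0_iff.2 (TopologicalSpace.countable_countableBasis X).to_subtype).trans
        aleph0_le_continuum)

theorem continuum_le_mk_image_of_isClosed {X : Type*} {Y : Type u} [TopologicalSpace X]
    [SigmaCompactSpace X] [TopologicalSpace Y] [PolishSpace Y] {g : X → Y} (hg : Continuous g)
    {K : Set X} (hK : IsClosed K) (hunc : ¬ (g '' K).Countable) : 𝔠 ≤ #(g '' K) := by
  have himage : g '' K = ⋃ n, g '' (K ∩ compactCovering X n) := by
    rw [← image_iUnion, ← inter_iUnion, iUnion_compactCovering, inter_univ]
  obtain ⟨n, hn⟩ : ∃ n, ¬ (g '' (K ∩ compactCovering X n)).Countable := by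
    by_contra! hcount
    exact hunc (himage ▸ countable_iUnion hcount)
  have hclosed : IsClosed (g '' (K ∩ compactCovering X n)) :=
    (((isCompact_compactCovering X n).inter_left hK).image hg).isClosed
  obtain ⟨F, hF, -, hinj⟩ := hclosed.exists_nat_bool_injection_of_not_countable hn
  have hle : lift.{u} #(ℕ → Bool) ≤ lift.{0} #(g '' K) :=
    lift_mk_le'.2 ⟨fun x => ⟨F x, image_mono inter_subset_left (hF (mem_range_self x))⟩,
      fun x y hxy => hinj (congrArg Subtype.val hxy)⟩
  simpa using hle

end Selection

section Graph

/-- Diagonalisation property of a real function: its graph meets every closed subset of the plane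
with uncountable first projection. -/
def GraphMeetsClosed (f : ℝ → ℝ) : Prop :=
  ∀ K : Set (ℝ × ℝ), IsClosed K → ¬ (Prod.fst '' K).Countable → ∃ x, (x, f x) ∈ K

/-- A strongly Darboux function takes every real value on every nondegenerate interval. -/
def StronglyDarboux (f : ℝ → ℝ) : Prop :=
  ∀ ⦃a b : ℝ⦄, a < b → ∀ y, ∃ x ∈ Ioo a b, f x = y

/-- A real function has connected graph if its graph over every (possibly unbounded or degenerate)
interval is connected. -/
def HasConnectedGraph (f : ℝ → ℝ) : Prop :=
  ∀ ⦃J : Set ℝ⦄, J.OrdConnected → IsPreconnected ((fun x => (x, f x)) '' J)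

theorem exists_graphMeetsClosed : ∃ f : ℝ → ℝ, GraphMeetsClosed f := by
  let ι := {K : {K : Set (ℝ × ℝ) // IsClosed K} // ¬ (Prod.fst '' K.1).Countable}
  obtain ⟨g, hg, hgmem⟩ := exists_injective_forall_mem (ι := ι) (fun i => Prod.fst '' i.1.1)
    fun i => ((mk_subtype_le _).trans (mk_isClosed_le_continuum _)).trans
      (continuum_le_mk_image_of_isClosed continuous_fst i.1.2 i.2)
  have hfiber (i : ι) : ∃ y, (g i, y) ∈ i.1.1 := by
    obtain ⟨⟨a, b⟩, hab, h⟩ := hgmem i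
    exact ⟨b, h ▸ hab⟩
  choose y hy using hfiber
  refine ⟨Function.extend g y 0, fun K hK hunc => ⟨g ⟨⟨K, hK⟩, hunc⟩, ?_⟩⟩
  rw [hg.extend_apply]
  exact hy ⟨⟨K, hK⟩, hunc⟩

theorem GraphMeetsClosed.stronglyDarboux {f : ℝ → ℝ} (hf : GraphMeetsClosed f) :
    StronglyDarboux f := by
  intro a b hab y
  obtain ⟨c, hac, hcb⟩ := exists_between hab
  obtain ⟨d, hcd, hdb⟩ := exists_between hcb
  have hunc : ¬ (Icc c d).Countable := fun h => hcd.not_ge (Real.Icc_countable_iff.1 h)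
  obtain ⟨x, ⟨hcx, hxd⟩, hxy⟩ := hf (Icc c d ×ˢ {y}) (isClosed_Icc.prod isClosed_singleton)
    (by rwa [fst_image_prod _ (singleton_nonempty y)])
  exact ⟨x, ⟨hac.trans_le hcx, hxd.trans_lt hdb⟩, hxy⟩

theorem StronglyDarboux.exists_mem_graph {f : ℝ → ℝ} (hf : StronglyDarboux f) {O : Set (ℝ × ℝ)}
    (hO : IsOpen O) (hne : O.Nonempty) : ∃ x, (x, f x) ∈ O := by
  obtain ⟨⟨z, y⟩, hzy⟩ := hne
  have hnhds : (fun x => (x, y)) ⁻¹' O ∈ 𝓝 z := (hO.preimage (.prodMk_left y)).mem_nhds hzy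
  obtain ⟨a, b, hab, hsub⟩ := mem_nhds_iff_exists_Ioo_subset.1 hnhds
  obtain ⟨x, hx, rfl⟩ := hf (hab.1.trans hab.2) y
  exact ⟨x, hsub hx⟩

theorem GraphMeetsClosed.countable_of_graph_subset {f : ℝ → ℝ} (hf : GraphMeetsClosed f)
    {W : Set (ℝ × ℝ)} (hW : IsOpen W) {J : Set ℝ} (hJ : IsClosed J)
    (hcov : ∀ x ∈ J, (x, f x) ∈ W) : {x ∈ J | ∃ y, (x, y) ∉ W}.Countable := by
  by_contra hunc
  have himage : Prod.fst '' (J ×ˢ Set.univ ∩ Wᶜ) = {x ∈ J | ∃ y, (x, y) ∉ W} := by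
    ext x
    simp
  obtain ⟨x, hxJ, hxW⟩ := hf (J ×ˢ Set.univ ∩ Wᶜ) ((hJ.prod isClosed_univ).inter hW.isClosed_compl)
    (himage ▸ hunc)
  exact hxW (hcov x hxJ.1)

theorem exists_mem_inter_of_vertical_line_subset {X Y : Type*} [TopologicalSpace X]
    [TopologicalSpace Y] [PreconnectedSpace Y] {U V : Set (X × Y)} (hU : IsOpen U) (hV : IsOpen V)
    {z : X} (hcov : ∀ y, (z, y) ∈ U ∪ V) (hzU : z ∈ Prod.fst '' U) (hzV : z ∈ Prod.fst '' V) :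
    ∃ y, (z, y) ∈ U ∩ V := by
  obtain ⟨⟨_, u⟩, hu, rfl⟩ := hzU
  obtain ⟨⟨z, v⟩, hv, rfl⟩ := hzV
  have hline : Continuous fun y : Y => (z, y) := .prodMk_right _
  obtain ⟨y, -, hy⟩ := isPreconnected_univ _ _ (hU.preimage hline) (hV.preimage hline)
    (fun y _ => hcov y) ⟨u, trivial, hu⟩ ⟨v, trivial, hv⟩
  exact ⟨y, hy⟩

theorem GraphMeetsClosed.exists_mem_inter_of_lt {f : ℝ → ℝ} (hf : GraphMeetsClosed f)
    {U V : Set (ℝ × ℝ)} (hU : IsOpen U) (hV : IsOpen V) {a b : ℝ} (hab : a < b)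
    (hcov : ∀ x ∈ Icc a b, (x, f x) ∈ U ∪ V) (ha : (a, f a) ∈ U) (hb : (b, f b) ∈ V) :
    ∃ x ∈ Icc a b, (x, f x) ∈ U ∩ V := by
  have hP : IsOpen (Prod.fst '' U) := isOpenMap_fst U hU
  have hQ : IsOpen (Prod.fst '' V) := isOpenMap_fst V hV
  have hPQ : (Ioo a b ∩ (Prod.fst '' U ∩ Prod.fst '' V)).Nonempty := by
    refine isPreconnected_Ioo _ _ hP hQ (fun x hx => ?_) ?_ ?_
    · exact (hcov x (Ioo_subset_Icc_self hx)).imp (mem_image_of_mem Prod.fst)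
        (mem_image_of_mem Prod.fst)
    · have hnhds := mem_nhdsWithin_of_mem_nhds (t := Ioi a) (hP.mem_nhds (mem_image_of_mem _ ha))
      exact Filter.nonempty_of_mem (Filter.inter_mem (Ioo_mem_nhdsGT hab) hnhds)
    · have hnhds := mem_nhdsWithin_of_mem_nhds (t := Iio b) (hQ.mem_nhds (mem_image_of_mem _ hb))
      exact Filter.nonempty_of_mem (Filter.inter_mem (Ioo_mem_nhdsLT hab) hnhds)
  have hcount := hf.countable_of_graph_subset (hU.union hV) isClosed_Icc hcov
  obtain ⟨z, hz, hzab, hzU, hzV⟩ :=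
    (hcount.dense_compl ℝ).exists_mem_open (isOpen_Ioo.inter (hP.inter hQ)) hPQ
  have hzcov (y : ℝ) : (z, y) ∈ U ∪ V := by
    by_contra hy
    exact hz ⟨Ioo_subset_Icc_self hzab, y, hy⟩
  obtain ⟨y, hy⟩ := exists_mem_inter_of_vertical_line_subset hU hV hzcov hzU hzV
  obtain ⟨x, hxab, hx⟩ := hf.stronglyDarboux.exists_mem_graph
    ((isOpen_Ioo.prod isOpen_univ).inter (hU.inter hV)) ⟨(z, y), ⟨hzab, trivial⟩, hy⟩
  exact ⟨x, Ioo_subset_Icc_self hxab.1, hx⟩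

theorem GraphMeetsClosed.hasConnectedGraph {f : ℝ → ℝ} (hf : GraphMeetsClosed f) :
    HasConnectedGraph f := by
  rintro J hJ U V hU hV hcov ⟨_, ⟨a, ha, rfl⟩, haU⟩ ⟨_, ⟨b, hb, rfl⟩, hbV⟩
  have hcov (x : ℝ) (hx : x ∈ J) : (x, f x) ∈ U ∪ V := hcov (mem_image_of_mem _ hx)
  suffices ∃ x ∈ J, (x, f x) ∈ U ∩ V from
    let ⟨x, hx, hxUV⟩ := this; ⟨_, mem_image_of_mem _ hx, hxUV⟩
  rcases lt_trichotomy a b with hab | rfl | hba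
  · obtain ⟨x, hx, hxUV⟩ := hf.exists_mem_inter_of_lt hU hV hab
      (fun x hx => hcov x (hJ.out ha hb hx)) haU hbV
    exact ⟨x, hJ.out ha hb hx, hxUV⟩
  · exact ⟨a, ha, haU, hbV⟩
  · obtain ⟨x, hx, hxVU⟩ := hf.exists_mem_inter_of_lt hV hU hba
      (fun x hx => (hcov x (hJ.out hb ha hx)).symm) hbV haU
    exact ⟨x, hJ.out hb ha hx, hxVU.symm⟩

end Graph

section FilterCharacter

variable {α β : Type u}

/-- The character of a filter: the least cardinality of a filter basis. -/
noncomputable def filterCharacter (l : Filter α) : Cardinal.{u} :=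
  sInf {c | ∃ B : Set (Set α), l.HasBasis (· ∈ B) id ∧ #B = c}

theorem exists_hasBasis_mk_eq_filterCharacter (l : Filter α) :
    ∃ B : Set (Set α), l.HasBasis (· ∈ B) id ∧ #B = filterCharacter l :=
  csInf_mem (s := {c | ∃ B : Set (Set α), l.HasBasis (· ∈ B) id ∧ #B = c})
    ⟨_, {s | s ∈ l}, l.basis_sets, rfl⟩

theorem filterCharacter_le_of_hasBasis {ι : Type u} {l : Filter α} {s : ι → Set α}
    (h : l.HasBasis (fun _ => True) s) : filterCharacter l ≤ #ι :=
  calc filterCharacter l ≤ #(range s) :=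
        csInf_le' ⟨range s, ⟨fun t => by simp [h.mem_iff]⟩, rfl⟩
    _ ≤ #ι := mk_range_le

theorem filterCharacter_comap_le (g : α → β) (l : Filter β) :
    filterCharacter (l.comap g) ≤ filterCharacter l := by
  obtain ⟨B, hB, hBcard⟩ := exists_hasBasis_mk_eq_filterCharacter l
  rw [← hBcard]
  exact filterCharacter_le_of_hasBasis (ι := B) (s := fun b => g ⁻¹' b)
    ⟨fun t => by simp [(hB.comap g).mem_iff]⟩

theorem filterCharacter_map_le (g : α → β) (l : Filter α) :
    filterCharacter (l.map g) ≤ filterCharacter l := by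
  obtain ⟨B, hB, hBcard⟩ := exists_hasBasis_mk_eq_filterCharacter l
  rw [← hBcard]
  exact filterCharacter_le_of_hasBasis (ι := B) (s := fun b => g '' b)
    ⟨fun t => by simp [(hB.map g).mem_iff]⟩

theorem filterCharacter_inf_principal_le (l : Filter α) (s : Set α) :
    filterCharacter (l ⊓ 𝓟 s) ≤ filterCharacter l := by
  obtain ⟨B, hB, hBcard⟩ := exists_hasBasis_mk_eq_filterCharacter l
  rw [← hBcard]
  exact filterCharacter_le_of_hasBasis (ι := B) (s := fun b => b ∩ s)
    ⟨fun t => by simp [(hB.inf_principal s).mem_iff]⟩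

theorem filterCharacter_le_aleph0 (l : Filter α) [l.IsCountablyGenerated] :
    filterCharacter l ≤ ℵ₀ := by
  obtain ⟨s, hs⟩ := l.exists_antitone_basis
  simpa using filterCharacter_le_of_hasBasis (ι := ULift ℕ) (s := fun n => s n.down)
    ⟨fun t => by simp [hs.mem_iff]⟩

theorem filterCharacter_nhds_le_tweight {X : Type} [TopologicalSpace X] (x : X) :
    filterCharacter (𝓝 x) ≤ tweight X := by
  refine le_csInf ⟨_, _, TopologicalSpace.isTopologicalBasis_opens, rfl⟩ ?_
  rintro _ ⟨B, hB, rfl⟩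
  exact (filterCharacter_le_of_hasBasis (ι := {s // s ∈ B ∧ x ∈ s}) (s := Subtype.val)
    ⟨fun t => by simp [hB.nhds_hasBasis.mem_iff]⟩).trans (mk_le_mk_of_subset fun s hs => hs.1)

theorem tweight_le_sum_filterCharacter_nhds (X : Type) [TopologicalSpace X] :
    tweight X ≤ Cardinal.sum fun x : X => filterCharacter (𝓝 x) := by
  choose B hB hBcard using fun x : X => exists_hasBasis_mk_eq_filterCharacter (𝓝 x)
  have hbasis : TopologicalSpace.IsTopologicalBasis (range fun p : Σ x, B x => interior p.2.1) := by
    refine TopologicalSpace.isTopologicalBasis_of_isOpen_of_nhds ?_ fun x U hx hU => ?_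
    · rintro _ ⟨p, rfl⟩
      exact isOpen_interior
    · obtain ⟨s, hs, hsU⟩ := (hB x).mem_iff.1 (hU.mem_nhds hx)
      exact ⟨_, ⟨⟨x, s, hs⟩, rfl⟩, mem_interior_iff_mem_nhds.2 ((hB x).mem_of_mem hs),
        interior_subset.trans hsU⟩
  calc tweight X ≤ #(range fun p : Σ x, B x => interior p.2.1) := csInf_le' ⟨_, hbasis, rfl⟩
    _ ≤ #(Σ x, B x) := mk_range_le
    _ = Cardinal.sum fun x : X => filterCharacter (𝓝 x) := by simp only [mk_sigma, hBcard]

end FilterCharacter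

section IndependentFamily

variable {A J : Type u}

/-- A family of subsets of `A` is independent if every membership pattern prescribed on finitely
many members is realised by some point of `A`. -/
def IndependentFamily (I : J → Set A) : Prop :=
  ∀ (s : Finset J) (T : Set J), ∃ a, ∀ j ∈ s, (a ∈ I j ↔ j ∈ T)

theorem exists_finset_separating {Y : J → Set A} (hY : Function.Injective Y) (s : Finset J) :
    ∃ F : Finset A, ∀ i ∈ s, ∀ j ∈ s, (∀ x ∈ F, x ∈ Y i ↔ x ∈ Y j) → i = j := by
  classical
  have hsep (p : J × J) : ∃ F : Finset A, (∀ x ∈ F, x ∈ Y p.1 ↔ x ∈ Y p.2) → p.1 = p.2 := by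
    by_cases h : ∃ x, ¬ (x ∈ Y p.1 ↔ x ∈ Y p.2)
    · obtain ⟨x, hx⟩ := h
      exact ⟨{x}, fun hF => absurd (hF x (Finset.mem_singleton_self x)) hx⟩
    · exact ⟨∅, fun _ => hY (Set.ext (not_exists_not.1 h))⟩
  choose F hF using hsep
  exact ⟨(s ×ˢ s).biUnion F, fun i hi j hj h => hF (i, j) fun x hx =>
    h x (Finset.mem_biUnion.2 ⟨_, Finset.mk_mem_product hi hj, hx⟩)⟩

/- Hausdorff's construction: identify `A` with the set of pairs `(F, 𝓕)` of a finite subset `F` of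
`A` and a finite set `𝓕` of finite subsets, and let `Y ⊆ A` determine the set of all `(F, 𝓕)` with
`F ∩ Y ∈ 𝓕`. -/
theorem exists_independentFamily [Infinite A] (hJ : #J ≤ 2 ^ #A) :
    ∃ I : J → Set A, IndependentFamily I := by
  classical
  have hcard : #(Finset A × Finset (Finset A)) = #A := by
    simp only [mk_prod, lift_id, mk_finset_of_infinite, mul_eq_self (aleph0_le_mk A)]
  obtain ⟨e⟩ := Cardinal.eq.1 hcard
  rw [← mk_set] at hJ
  obtain ⟨Y⟩ := hJ
  refine ⟨fun j => {a | (e.symm a).1.filter (· ∈ Y j) ∈ (e.symm a).2}, fun s T => ?_⟩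
  obtain ⟨F, hF⟩ := exists_finset_separating Y.injective s
  let trace (j : J) : Finset A := F.filter (· ∈ Y j)
  have htrace : Set.InjOn trace s := fun i hi j hj hij =>
    hF i hi j hj fun x hx => by simpa [trace, hx] using Finset.ext_iff.1 hij x
  refine ⟨e (F, (s.filter (· ∈ T)).image trace), fun i hi => ?_⟩
  simp only [mem_ofPred_eq, Equiv.symm_apply_apply, Finset.mem_image, Finset.mem_filter]
  constructor
  · rintro ⟨j, ⟨hjs, hjT⟩, hji⟩
    exact htrace hjs hi hji ▸ hjT
  · exact fun hiT => ⟨i, ⟨hi, hiT⟩, rfl⟩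

/-- The filter generated by the sets `I j` for `j ∈ T` and their complements for `j ∉ T`. -/
def patternFilter (I : J → Set A) (T : Set J) : Filter A :=
  ⨅ j, 𝓟 {a | a ∈ I j ↔ j ∈ T}

variable {I : J → Set A} {T : Set J}

theorem setOf_mem_iff_mem_patternFilter (I : J → Set A) (T : Set J) (j : J) :
    {a | a ∈ I j ↔ j ∈ T} ∈ patternFilter I T :=
  mem_iInf_of_mem j (mem_principal_self _)

theorem hasBasis_patternFilter (I : J → Set A) (T : Set J) :
    (patternFilter I T).HasBasis (fun _ : Finset J => True)
      fun s => {a | ∀ j ∈ s, (a ∈ I j ↔ j ∈ T)} := by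
  refine (hasBasis_iInf_principal_finite _).to_hasBasis (fun s hs => ?_) fun s _ => ?_
  · exact ⟨hs.toFinset, trivial, fun a ha => mem_iInter₂.2 fun j hj => ha j (hs.mem_toFinset.2 hj)⟩
  · exact ⟨s, s.finite_toSet, fun a ha j hj => mem_iInter₂.1 ha j hj⟩

namespace IndependentFamily

theorem patternFilter_neBot (hI : IndependentFamily I) (T : Set J) : (patternFilter I T).NeBot :=
  (hasBasis_patternFilter I T).neBot_iff.2 fun {s} _ => hI s T

theorem patternFilter_injective (hI : IndependentFamily I) :
    Function.Injective (patternFilter I) := by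
  intro T T' h
  ext j
  have hT := setOf_mem_iff_mem_patternFilter I T j
  have hT' := h ▸ setOf_mem_iff_mem_patternFilter I T' j
  have := hI.patternFilter_neBot T
  obtain ⟨a, ha, ha'⟩ := Filter.nonempty_of_mem (inter_mem hT hT')
  exact ha.symm.trans ha'

theorem mem_of_subset (hI : IndependentFamily I) {s : Finset J} {j : J}
    (h : {a | ∀ i ∈ s, (a ∈ I i ↔ i ∈ T)} ⊆ {a | a ∈ I j ↔ j ∈ T}) : j ∈ s := by
  classical
  by_contra hj
  obtain ⟨a, ha⟩ := hI (insert j s) (symmDiff T {j})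
  have has : ∀ i ∈ s, (a ∈ I i ↔ i ∈ T) := fun i hi => by
    have hij : i ≠ j := fun hij => hj (hij ▸ hi)
    simpa [mem_symmDiff, hij] using ha i (Finset.mem_insert_of_mem hi)
  have haj : a ∈ I j ↔ j ∉ T := by
    simpa [mem_symmDiff] using ha j (Finset.mem_insert_self j s)
  exact iff_not_self ((h has).symm.trans haj)

theorem mk_le_filterCharacter_mul_aleph0 (hI : IndependentFamily I) (T : Set J) :
    #J ≤ filterCharacter (patternFilter I T) * ℵ₀ := by
  obtain ⟨B, hB, hBcard⟩ := exists_hasBasis_mk_eq_filterCharacter (patternFilter I T)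
  choose s _ hs using fun b : B => (hasBasis_patternFilter I T).mem_iff.1 (hB.mem_of_mem b.2)
  have hcov : ⋃ b, (s b : Set J) = Set.univ := eq_univ_of_forall fun j => by
    obtain ⟨b, hb, hbj⟩ := hB.mem_iff.1 (setOf_mem_iff_mem_patternFilter I T j)
    exact mem_iUnion.2 ⟨⟨b, hb⟩, hI.mem_of_subset ((hs ⟨b, hb⟩).trans hbj)⟩
  calc #J = #(⋃ b, (s b : Set J)) := by rw [hcov, mk_univ]
    _ ≤ Cardinal.sum fun b => #(s b : Set J) := mk_iUnion_le_sum_mk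
    _ ≤ Cardinal.sum fun _ : B => ℵ₀ := sum_le_sum _ _ fun b => (s b).finite_toSet.lt_aleph0.le
    _ = filterCharacter (patternFilter I T) * ℵ₀ := by rw [sum_const', hBcard]

theorem filterCharacter_patternFilter (hI : IndependentFamily I) (hJ : ℵ₀ < #J) (T : Set J) :
    filterCharacter (patternFilter I T) = #J := by
  have : Infinite J := infinite_iff.2 hJ.le
  refine le_antisymm ?_ ?_
  · exact (filterCharacter_le_of_hasBasis (hasBasis_patternFilter I T)).trans_eq
      (mk_finset_of_infinite J)
  · have hle := (hI.mk_le_filterCharacter_mul_aleph0 T).trans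
      (mul_le_max_of_aleph0_le_right le_rfl)
    exact (le_max_iff.1 hle).resolve_right hJ.not_ge

end IndependentFamily

end IndependentFamily

section OpenEmbedding

variable {X Y : Type*} [TopologicalSpace X] [TopologicalSpace Y] {e : X → Y}

theorem separatedNhds_image (he : IsOpenMap e) (hinj : Function.Injective e) {s t : Set X}
    (h : SeparatedNhds s t) : SeparatedNhds (e '' s) (e '' t) :=
  let ⟨U, V, hU, hV, hsU, htV, hUV⟩ := h
  ⟨e '' U, e '' V, he U hU, he V hV, image_mono hsU, image_mono htV,
    (disjoint_image_iff hinj).2 hUV⟩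

theorem isGδ_image (he : IsOpenMap e) (hinj : Function.Injective e) {s : Set X} (hs : IsGδ s) :
    IsGδ (e '' s) := by
  obtain ⟨V, hV, rfl⟩ := isGδ_iff_eq_iInter_nat.1 hs
  rw [hinj.injOn.image_iInter_eq]
  exact .iInter_of_isOpen fun n => he _ (hV n)

end OpenEmbedding

/-- A filter on a topological space is regular if it has a basis of closures of open members. -/
def RegularFilter {X : Type*} [TopologicalSpace X] (l : Filter X) : Prop :=
  ∀ s ∈ l, ∃ t ∈ l, IsOpen t ∧ closure t ⊆ s

theorem RegularFilter.interior_mem {X : Type*} [TopologicalSpace X] {l : Filter X}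
    (hl : RegularFilter l) {s : Set X} (hs : s ∈ l) : interior s ∈ l :=
  let ⟨_, ht, hto, hts⟩ := hl s hs
  mem_of_superset ht (interior_maximal (subset_closure.trans hts) hto)

/-- The extension of a space `M` by one point at infinity, whose neighbourhoods trace the given
filter on `M`. -/
inductive FilterExtension {M : Type*} (l : Filter M) : Type _
  | of (m : M) : FilterExtension l
  | infty : FilterExtension l

namespace FilterExtension

section Basic

variable {M : Type*} {l : Filter M}

theorem of_injective : Function.Injective (of : M → FilterExtension l) := fun _ _ => of.inj

theorem range_of : range (of : M → FilterExtension l) = {infty}ᶜ := by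
  ext (m | _) <;> simp

theorem image_of_preimage_of {s : Set (FilterExtension l)} (hs : infty ∉ s) :
    of '' (of ⁻¹' s) = s :=
  image_preimage_eq_of_subset (range_of (l := l) ▸ subset_compl_singleton_iff.2 hs)

theorem insert_infty_image_of_preimage_of {s : Set (FilterExtension l)} (hs : infty ∈ s) :
    insert infty (of '' (of ⁻¹' s)) = s := by
  ext (m | _) <;> simp [hs]

theorem preimage_of_insert_infty (s : Set M) :
    of ⁻¹' (insert (infty : FilterExtension l) (of '' s)) = s := by
  ext m
  simp

variable [TopologicalSpace M]

instance : TopologicalSpace (FilterExtension l) where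
  IsOpen O := IsOpen (of ⁻¹' O) ∧ (infty ∈ O → of ⁻¹' O ∈ l)
  isOpen_univ := ⟨isOpen_univ, fun _ => univ_mem⟩
  isOpen_inter _ _ hs ht := ⟨hs.1.inter ht.1, fun h => inter_mem (hs.2 h.1) (ht.2 h.2)⟩
  isOpen_sUnion S hS := by
    refine ⟨?_, fun ⟨t, ht, hinfty⟩ => ?_⟩
    · rw [preimage_sUnion]
      exact isOpen_biUnion fun t ht => (hS t ht).1
    · exact mem_of_superset ((hS t ht).2 hinfty) (preimage_mono (subset_sUnion_of_mem ht))

theorem isOpen_iff {O : Set (FilterExtension l)} :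
    IsOpen O ↔ IsOpen (of ⁻¹' O) ∧ (infty ∈ O → of ⁻¹' O ∈ l) := Iff.rfl

theorem continuous_of : Continuous (of : M → FilterExtension l) := ⟨fun _ h => h.1⟩

theorem isOpenMap_of : IsOpenMap (of : M → FilterExtension l) := fun s hs => by
  rw [isOpen_iff, preimage_image_eq s of_injective]
  exact ⟨hs, fun h => by simp at h⟩

theorem isOpenEmbedding_of : IsOpenEmbedding (of : M → FilterExtension l) :=
  .of_continuous_injective_isOpenMap continuous_of of_injective isOpenMap_of

theorem isOpen_insert_infty {s : Set M} (hs : IsOpen s) (hsl : s ∈ l) :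
    IsOpen (insert (infty : FilterExtension l) (of '' s)) := by
  rw [isOpen_iff, preimage_of_insert_infty]
  exact ⟨hs, fun _ => hsl⟩

theorem isClosed_singleton_of [T1Space M] {m : M} (hm : {m}ᶜ ∈ l) :
    IsClosed ({of m} : Set (FilterExtension l)) := by
  have hpre : of ⁻¹' ({of m}ᶜ : Set (FilterExtension l)) = {m}ᶜ := by
    ext x
    simp
  rw [← isOpen_compl_iff, isOpen_iff, hpre]
  exact ⟨isOpen_compl_singleton, fun _ => hm⟩

theorem tendsto_of : Tendsto of l (𝓝 (infty : FilterExtension l)) := fun _ hW =>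
  let ⟨_, hOW, hO, hinfty⟩ := mem_nhds_iff.1 hW
  mem_of_superset (hO.2 hinfty) (preimage_mono hOW)

theorem infty_mem_closure {s : Set (FilterExtension l)} (hs : ∃ᶠ m in l, of m ∈ s) :
    infty ∈ closure s :=
  mem_closure_iff_frequently.2 (tendsto_of.frequently hs)

theorem insert_infty_mem_nhds (hl : ∀ s ∈ l, interior s ∈ l) {s : Set M} (hs : s ∈ l) :
    insert infty (of '' s) ∈ 𝓝 (infty : FilterExtension l) :=
  mem_of_superset ((isOpen_insert_infty isOpen_interior (hl s hs)).mem_nhds (mem_insert _ _))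
    (insert_subset_insert (image_mono interior_subset))

theorem hasBasis_nhds_infty (hl : ∀ s ∈ l, interior s ∈ l) {ι : Sort*} {p : ι → Prop}
    {s : ι → Set M} (h : l.HasBasis p s) :
    (𝓝 (infty : FilterExtension l)).HasBasis p fun i => insert infty (of '' s i) where
  mem_iff' W := by
    constructor
    · intro hW
      obtain ⟨i, hi, hiW⟩ := h.mem_iff.1 (tendsto_of hW)
      exact ⟨i, hi, insert_subset (mem_of_mem_nhds hW) (image_subset_iff.2 hiW)⟩
    · rintro ⟨i, hi, hiW⟩
      exact mem_of_superset (insert_infty_mem_nhds hl (h.mem_of_mem hi)) hiW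

theorem comap_of_nhds_infty (hl : ∀ s ∈ l, interior s ∈ l) :
    comap of (𝓝 (infty : FilterExtension l)) = l := by
  refine le_antisymm (fun s hs => ?_) tendsto_of.le_comap
  exact ⟨_, insert_infty_mem_nhds hl hs, (preimage_of_insert_infty s).subset⟩

/-- The space `M` as the complement of the point at infinity. -/
noncomputable def homeomorphCompl (l : Filter M) : M ≃ₜ ({infty}ᶜ : Set (FilterExtension l)) :=
  isOpenEmbedding_of.isEmbedding.toHomeomorph.trans (Homeomorph.setCongr range_of)

end Basic

section Cardinal

variable {M : Type u} {l : Filter M}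

theorem mk_eq [Infinite M] : #(FilterExtension l) = #M := by
  refine le_antisymm ?_ (mk_le_of_injective of_injective)
  have hsurj : Function.Surjective fun o : Option M => o.elim (infty : FilterExtension l) of
    | of m => ⟨some m, rfl⟩
    | infty => ⟨none, rfl⟩
  calc #(FilterExtension l) ≤ #(Option M) := mk_le_of_surjective hsurj
    _ = #M := by rw [mk_option, add_one_eq (aleph0_le_mk M)]

theorem filterCharacter_nhds_infty [TopologicalSpace M] (hl : ∀ s ∈ l, interior s ∈ l) :
    filterCharacter (𝓝 (infty : FilterExtension l)) = filterCharacter l := by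
  refine le_antisymm ?_ ?_
  · obtain ⟨B, hB, hBcard⟩ := exists_hasBasis_mk_eq_filterCharacter l
    rw [← hBcard]
    exact filterCharacter_le_of_hasBasis (ι := B) (s := fun b => insert infty (of '' b.1))
      ⟨fun t => by simp [(hasBasis_nhds_infty hl hB).mem_iff]⟩
  · calc filterCharacter l = filterCharacter (comap of (𝓝 (infty : FilterExtension l))) := by
          rw [comap_of_nhds_infty hl]
      _ ≤ filterCharacter (𝓝 infty) := filterCharacter_comap_le of _

end Cardinal

section Separation

variable {M : Type*} [TopologicalSpace M] {l : Filter M}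

theorem separatedNhds_infty (hl : RegularFilter l) {K : Set (FilterExtension l)} (hK : IsClosed K)
    (hinfty : infty ∉ K) : SeparatedNhds {infty} K := by
  obtain ⟨t, htl, hto, htK⟩ := hl _ (hK.isOpen_compl.2 hinfty)
  refine ⟨_, of '' (closure t)ᶜ, isOpen_insert_infty hto htl,
    isOpenMap_of _ isClosed_closure.isOpen_compl, by simp, ?_, ?_⟩
  · rw [← image_of_preimage_of hinfty]
    exact image_mono (subset_compl_comm.1 htK)
  · rw [disjoint_insert_left, disjoint_image_iff of_injective]
    exact ⟨by simp, disjoint_compl_right_iff_subset.2 subset_closure⟩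

theorem separatedNhds_of_infty_notMem [NormalSpace M] (hl : RegularFilter l)
    {H K : Set (FilterExtension l)} (hH : IsClosed H) (hK : IsClosed K) (hHK : Disjoint H K)
    (hinfty : infty ∉ K) : SeparatedNhds H K := by
  have hM : SeparatedNhds (of '' (of ⁻¹' H)) (of '' (of ⁻¹' K) : Set (FilterExtension l)) :=
    separatedNhds_image isOpenMap_of of_injective <|
      normal_separation (hH.preimage continuous_of) (hK.preimage continuous_of) (hHK.preimage of)
  rw [image_of_preimage_of hinfty] at hM
  refine ((separatedNhds_infty hl hK hinfty).union_left hM).mono ?_ Subset.rfl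
  rintro (m | _) h
  · exact Or.inr (mem_image_of_mem of h)
  · exact Or.inl rfl

theorem normalSpace [NormalSpace M] (hl : RegularFilter l) : NormalSpace (FilterExtension l) where
  normal H K hH hK hHK := by
    by_cases hinfty : infty ∈ K
    · exact (separatedNhds_of_infty_notMem hl hK hH hHK.symm
        (hHK.notMem_of_mem_right hinfty)).symm
    · exact separatedNhds_of_infty_notMem hl hH hK hHK hinfty

theorem isGδ_singleton_infty (hl : ∀ s ∈ l, interior s ∈ l)
    (hinter : ∃ t : ℕ → Set M, (∀ n, t n ∈ l) ∧ ⋂ n, t n = ∅) :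
    IsGδ ({infty} : Set (FilterExtension l)) := by
  obtain ⟨t, htl, ht⟩ := hinter
  have heq : ({infty} : Set (FilterExtension l)) =
      ⋂ n, insert infty (of '' interior (t n)) := by
    ext (m | _)
    · have hm : ∃ n, m ∉ t n := by simpa using eq_empty_iff_forall_notMem.1 ht m
      simpa using hm.imp fun n hn h => hn (interior_subset h)
    · simp
  rw [heq]
  exact .iInter_of_isOpen fun n => isOpen_insert_infty isOpen_interior (hl _ (htl n))

theorem isGδ_of_isClosed (hM : ∀ s : Set M, IsClosed s → IsGδ s)
    (hinfty : IsGδ ({infty} : Set (FilterExtension l))) {H : Set (FilterExtension l)}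
    (hH : IsClosed H) : IsGδ H := by
  have hHM : IsGδ (of '' (of ⁻¹' H) : Set (FilterExtension l)) :=
    isGδ_image isOpenMap_of of_injective (hM _ (hH.preimage continuous_of))
  by_cases h : infty ∈ H
  · rw [← insert_infty_image_of_preimage_of h]
    exact hinfty.union hHM
  · rwa [← image_of_preimage_of h]

end Separation

section Properties

variable {M : Type} [TopologicalSpace M] {l : Filter M}

theorem almostMetrizable [TopologicalSpace.MetrizableSpace M] (hl : RegularFilter l)
    (hinter : ∃ t : ℕ → Set M, (∀ n, t n ∈ l) ∧ ⋂ n, t n = ∅) :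
    AlmostMetrizable (FilterExtension l) := by
  let := TopologicalSpace.metrizableSpaceMetric M
  have hinfty := isGδ_singleton_infty (fun s => hl.interior_mem) hinter
  exact ⟨⟨normalSpace hl, fun H => isGδ_of_isClosed (fun s hs => hs.isGδ) hinfty⟩, infty,
    (homeomorphCompl l).symm.isEmbedding.metrizableSpace⟩

theorem nowhereLocallyConnected (hM : NowhereLocallyConnected M)
    (hinfty : ∃ U ∈ 𝓝 (infty : FilterExtension l), ∀ V ∈ 𝓝 infty, IsConnected V → ¬ V ⊆ U) :
    NowhereLocallyConnected (FilterExtension l)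
  | infty => hinfty
  | of m => by
    obtain ⟨U, hU, hUV⟩ := hM m
    refine ⟨of '' U, isOpenEmbedding_of.image_mem_nhds.2 hU, fun V hV hVconn hVU => ?_⟩
    have hVrange : of '' (of ⁻¹' V) = V :=
      image_preimage_eq_of_subset (hVU.trans (image_subset_range _ _))
    refine hUV (of ⁻¹' V) (continuous_of.continuousAt hV)
      ⟨⟨m, mem_preimage.2 (mem_of_mem_nhds hV)⟩, ?_⟩ ?_
    · rw [← isOpenEmbedding_of.isInducing.isPreconnected_image (f := (of : M → FilterExtension l)),
        hVrange]
      exact hVconn.isPreconnected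
    · exact (preimage_mono hVU).trans (preimage_image_eq U of_injective).subset

theorem eventually_eq_of_totallyPathDisconnected {L : Type*} [TopologicalSpace L]
    [LocallyPathConnectedSpace L] (hM : TotallyPathDisconnected M) {γ : L → FilterExtension l}
    (hγ : Continuous γ) {t : L} (ht : γ t ≠ infty) : ∀ᶠ s in 𝓝 t, γ s = γ t := by
  have hrange : γ ⁻¹' range of ∈ 𝓝 t :=
    (isOpenMap_of.isOpen_range.preimage hγ).mem_nhds (range_of (l := l) ▸ ht)
  filter_upwards [pathComponentIn_mem_nhds hrange] with s ⟨p, hp⟩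
  choose q hq using hp
  have hqcont : Continuous q := by
    rw [(isOpenEmbedding_of (l := l)).isEmbedding.continuous_iff, funext hq (f := of ∘ q)]
    exact hγ.comp p.continuous
  calc γ s = of (q 1) := by rw [hq, p.target]
    _ = of (q 0) := by rw [hM q hqcont 1 0]
    _ = γ t := by rw [hq, p.source]

theorem totallyPathDisconnected [T1Space M] (hM : TotallyPathDisconnected M)
    (hl : ∀ m, {m}ᶜ ∈ l) : TotallyPathDisconnected (FilterExtension l) := by
  have : LocallyPathConnectedSpace unitInterval :=
    (isQuotientMap_projIcc (h := zero_le_one)).locallyPathConnectedSpace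
  intro γ hγ
  have hconst (m : M) (s : unitInterval) (hs : γ s = of m) (t : unitInterval) : γ t = of m := by
    have hclopen : IsClopen (γ ⁻¹' {of m}) := by
      refine ⟨(isClosed_singleton_of (hl m)).preimage hγ, isOpen_iff_mem_nhds.2 fun t ht => ?_⟩
      have hne : γ t ≠ infty := by simp [show γ t = of m from ht]
      exact (eventually_eq_of_totallyPathDisconnected hM hγ hne).mono fun s hs => hs.trans ht
    exact eq_univ_iff_forall.1 (hclopen.eq_univ ⟨s, hs⟩) t
  intro s t
  cases hs : γ s with
  | of m => rw [hconst m s hs t]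
  | infty =>
    cases ht : γ t with
    | of m => rw [← hs, hconst m t ht s]
    | infty => rfl

end Properties

section Homeomorph

variable {M M' : Type*} [TopologicalSpace M] [TopologicalSpace M'] {l : Filter M} {l' : Filter M'}

theorem apply_infty [FirstCountableTopology M'] (hl : ∀ s ∈ l, interior s ∈ l)
    (hchar : ¬ l.IsCountablyGenerated) (h : FilterExtension l ≃ₜ FilterExtension l') :
    h infty = infty := by
  cases hm : h infty with
  | infty => rfl
  | of m =>
    have hgen : (𝓝 (of m : FilterExtension l')).IsCountablyGenerated := by
      rw [← isOpenEmbedding_of.map_nhds_eq]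
      infer_instance
    refine absurd ?_ hchar
    rw [← comap_of_nhds_infty hl, h.isInducing.nhds_eq_comap, hm]
    infer_instance

theorem tendsto_of_apply_infty (hl' : ∀ s ∈ l', interior s ∈ l')
    {h : FilterExtension l → FilterExtension l'} (hcont : Continuous h) (hinfty : h infty = infty)
    {g : M → M'} (hg : ∀ m, of (g m) = h (of m)) : Tendsto g l l' := by
  rw [← comap_of_nhds_infty hl', tendsto_comap_iff, ← hinfty]
  exact ((hcont.tendsto infty).comp tendsto_of).congr fun m => (hg m).symm

theorem exists_homeomorph_of_apply_infty (hl : ∀ s ∈ l, interior s ∈ l)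
    (hl' : ∀ s ∈ l', interior s ∈ l') (h : FilterExtension l ≃ₜ FilterExtension l')
    (hinfty : h infty = infty) :
    ∃ g : M ≃ₜ M', Tendsto g l l' ∧ Tendsto g.symm l' l := by
  have hcompl (x : FilterExtension l) : x ≠ infty ↔ h x ≠ infty := by
    rw [← hinfty, h.injective.ne_iff]
  let g : M ≃ₜ M' :=
    (homeomorphCompl l).trans ((h.subtype hcompl).trans (homeomorphCompl l').symm)
  have hg (m : M) : of (g m) = h (of m) :=
    congrArg Subtype.val ((homeomorphCompl l').apply_symm_apply ⟨h (of m), _⟩)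
  have hgsymm (m : M') : of (g.symm m) = h.symm (of m) := by
    rw [Homeomorph.eq_symm_apply, ← hg, g.apply_symm_apply]
  exact ⟨g, tendsto_of_apply_infty hl' h.continuous hinfty hg,
    tendsto_of_apply_infty hl h.symm.continuous (h.symm_apply_eq.2 hinfty.symm) hgsymm⟩

end Homeomorph

section Connected

variable {M : Type*} [TopologicalSpace M] {l : Filter M}

theorem preconnectedSpace (h : ∀ m, ∃ S, IsPreconnected S ∧ m ∈ S ∧ ∃ᶠ p in l, p ∈ S) :
    PreconnectedSpace (FilterExtension l) := by
  refine ⟨isPreconnected_of_forall infty fun y _ => ?_⟩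
  cases y with
  | infty => exact ⟨{infty}, subset_univ _, rfl, rfl, isPreconnected_singleton⟩
  | of m =>
    obtain ⟨S, hS, hm, hfreq⟩ := h m
    have hclosure : infty ∈ closure (of '' S : Set (FilterExtension l)) :=
      infty_mem_closure (hfreq.mono fun _ => mem_image_of_mem of)
    exact ⟨insert infty (of '' S), subset_univ _, mem_insert _ _, .inr (mem_image_of_mem of hm),
      (hS.image of continuous_of.continuousOn).subset_closure (subset_insert _ _)
        (insert_subset hclosure subset_closure)⟩

end Connected

section Weight

variable {M : Type} [TopologicalSpace M] [FirstCountableTopology M] {l : Filter M}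

theorem filterCharacter_nhds_of_le_aleph0 (m : M) :
    filterCharacter (𝓝 (of m : FilterExtension l)) ≤ ℵ₀ := by
  have : (𝓝 (of m : FilterExtension l)).IsCountablyGenerated := by
    rw [← isOpenEmbedding_of.map_nhds_eq]
    infer_instance
  exact filterCharacter_le_aleph0 _

theorem tweight_eq_filterCharacter [Infinite M] (hl : ∀ s ∈ l, interior s ∈ l)
    (hM : #M ≤ filterCharacter l) : tweight (FilterExtension l) = filterCharacter l := by
  have hchar : ℵ₀ ≤ filterCharacter l := (aleph0_le_mk M).trans hM
  refine le_antisymm ?_ (filterCharacter_nhds_infty hl ▸ filterCharacter_nhds_le_tweight infty)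
  have hle : ∀ p : FilterExtension l, filterCharacter (𝓝 p) ≤ filterCharacter l
    | of m => (filterCharacter_nhds_of_le_aleph0 m).trans hchar
    | infty => (filterCharacter_nhds_infty hl).le
  calc tweight (FilterExtension l) ≤ Cardinal.sum fun p => filterCharacter (𝓝 p) :=
        tweight_le_sum_filterCharacter_nhds _
    _ ≤ #(FilterExtension l) * filterCharacter l :=
        (sum_le_sum _ _ hle).trans_eq (sum_const' _ _)
    _ ≤ filterCharacter l := mul_le_of_le hchar (FilterExtension.mk_eq.trans_le hM) le_rfl

end Weight

end FilterExtension

section Fibers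

variable {X X' Z Z' : Type*} [TopologicalSpace X] [TopologicalSpace X']

theorem eq_of_isPreconnected_fiber [TopologicalSpace Z'] [TotallyDisconnectedSpace Z']
    {π : X → Z} {h : X → Z'}
    (hfiber : ∀ z, IsPreconnected (π ⁻¹' {z})) (hh : Continuous h) {x y : X} (hxy : π x = π y) :
    h x = h y :=
  ((hfiber (π y)).image h hh.continuousOn).subsingleton (mem_image_of_mem h hxy)
    (mem_image_of_mem h rfl)

theorem exists_homeomorph_semiconj_of_isPreconnected_fiber [TopologicalSpace Z]
    [TopologicalSpace Z'] [TotallyDisconnectedSpace Z] [TotallyDisconnectedSpace Z']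
    {π : X → Z} {π' : X' → Z'} {σ : Z → X} {σ' : Z' → X'}
    (hπ : Continuous π) (hπ' : Continuous π') (hσ : Continuous σ) (hσ' : Continuous σ')
    (hsec : Function.RightInverse σ π) (hsec' : Function.RightInverse σ' π')
    (hfiber : ∀ z, IsPreconnected (π ⁻¹' {z})) (hfiber' : ∀ z, IsPreconnected (π' ⁻¹' {z}))
    (g : X ≃ₜ X') : ∃ φ : Z ≃ₜ Z', ∀ x, π' (g x) = φ (π x) := by
  have hg {x y : X} : π x = π y → π' (g x) = π' (g y) :=
    eq_of_isPreconnected_fiber hfiber (hπ'.comp g.continuous)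
  have hgsymm {x y : X'} : π' x = π' y → π (g.symm x) = π (g.symm y) :=
    eq_of_isPreconnected_fiber hfiber' (hπ.comp g.symm.continuous)
  let φ : Z ≃ₜ Z' :=
    { toFun := fun z => π' (g (σ z))
      invFun := fun z => π (g.symm (σ' z))
      left_inv := fun z =>
        (hgsymm (hsec' _)).trans ((congrArg π (g.symm_apply_apply _)).trans (hsec z))
      right_inv := fun z =>
        (hg (hsec _)).trans ((congrArg π' (g.apply_symm_apply _)).trans (hsec' z))
      continuous_toFun := hπ'.comp (g.continuous.comp hσ)
      continuous_invFun := hπ.comp (g.symm.continuous.comp hσ') }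
  exact ⟨φ, fun x => hg (hsec (π x)).symm⟩

end Fibers

section LocalRank

variable {X Y α : Type*} [TopologicalSpace X] [TopologicalSpace Y] [LinearOrder α]

/-- A rank function determined locally, in the manner of the Cantor–Bendixson rank: near each point
all other points have smaller rank, and every smaller rank is attained arbitrarily close by. -/
structure IsLocalRank (ρ : X → α) : Prop where
  eventually_lt : ∀ x, ∀ᶠ t in 𝓝[≠] x, ρ t < ρ x
  frequently_eq : ∀ x, ∀ b < ρ x, ∃ᶠ t in 𝓝[≠] x, ρ t = b

theorem IsLocalRank.le_comp [WellFoundedLT α] {ρ : X → α} {σ : Y → α} (hρ : IsLocalRank ρ)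
    (hσ : IsLocalRank σ) {φ : X → Y} (hφ : Continuous φ) (hinj : Function.Injective φ) (x : X) :
    ρ x ≤ σ (φ x) := by
  induction hx : ρ x using WellFoundedLT.induction generalizing x with
  | ind a ih =>
    by_contra! hlt
    have hpunctured : Tendsto φ (𝓝[≠] x) (𝓝[≠] (φ x)) :=
      hφ.continuousWithinAt.tendsto_nhdsWithin fun t ht h => ht (hinj h)
    obtain ⟨t, ht, htlt⟩ := ((hρ.frequently_eq x _ (hx ▸ hlt)).and_eventually
      (hpunctured.eventually (hσ.eventually_lt (φ x)))).exists
    exact (ih _ hlt t ht).not_gt htlt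

theorem IsLocalRank.apply_homeomorph [WellFoundedLT α] {ρ : X → α} {σ : Y → α}
    (hρ : IsLocalRank ρ) (hσ : IsLocalRank σ) (φ : X ≃ₜ Y) (x : X) : σ (φ x) = ρ x :=
  le_antisymm (by simpa using hσ.le_comp hρ φ.symm.continuous φ.symm.injective (φ x))
    (hρ.le_comp hσ φ.continuous φ.injective x)

end LocalRank

/-- The antitone sequences in an ordered set, a subspace of `ℕ → A`. -/
abbrev AntitoneSeq (A : Type*) [Preorder A] : Type _ := {c : ℕ → A // Antitone c}

namespace AntitoneSeq

section Order

variable {A : Type u} [LinearOrder A]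

/-- The constant antitone sequence. -/
def const (a : A) : AntitoneSeq A := ⟨fun _ => a, antitone_const⟩

@[simp]
theorem const_apply (a : A) (n : ℕ) : (const a).1 n = a := rfl

/-- The antitone sequence that follows `c` before time `k` and is constant from then on. -/
def truncate (c : AntitoneSeq A) (b : A) (hb : ∀ n, b ≤ c.1 n) (k : ℕ) : AntitoneSeq A :=
  ⟨fun n => if n < k then c.1 n else b, fun m n hmn => by
    dsimp only
    split_ifs with hn hm hm
    · exact c.2 hmn
    · exact absurd (hmn.trans_lt hn) hm
    · exact hb m
    · exact le_rfl⟩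

variable [WellFoundedLT A]

/-- The eventual value of an antitone sequence in a well-ordered set. -/
noncomputable def lim (c : AntitoneSeq A) : A :=
  wellFounded_lt.min (range c.1) (range_nonempty _)

theorem exists_apply_eq_lim (c : AntitoneSeq A) : ∃ n, c.1 n = c.lim :=
  wellFounded_lt.min_mem _ (range_nonempty c.1)

theorem lim_le (c : AntitoneSeq A) (n : ℕ) : c.lim ≤ c.1 n :=
  not_lt.1 (wellFounded_lt.not_lt_min _ (mem_range_self n))

theorem apply_eq_lim_of_le {c : AntitoneSeq A} {m n : ℕ} (hm : c.1 m = c.lim) (hmn : m ≤ n) :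
    c.1 n = c.lim :=
  ((c.2 hmn).trans_eq hm).antisymm (c.lim_le n)

@[simp]
theorem lim_const (a : A) : (const a).lim = a :=
  let ⟨_, hn⟩ := (const a).exists_apply_eq_lim; hn.symm

theorem lim_truncate (c : AntitoneSeq A) {b : A} (hb : ∀ n, b ≤ c.1 n) (k : ℕ) :
    (c.truncate b hb k).lim = b := by
  obtain ⟨n, hn⟩ := (c.truncate b hb k).exists_apply_eq_lim
  rw [← apply_eq_lim_of_le hn (le_max_left n k)]
  exact if_neg (le_max_right n k).not_gt

theorem mk_eq [Infinite A] : #(AntitoneSeq A) = #A := by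
  have hcode (c : AntitoneSeq A) : ∃ p : List A × A, ∀ n, c.1 n = p.1.getD n p.2 := by
    obtain ⟨N, hN⟩ := c.exists_apply_eq_lim
    refine ⟨(List.ofFn fun i : Fin N => c.1 i, c.lim), fun n => ?_⟩
    rcases lt_or_ge n N with h | h
    · simp [List.getD, h]
    · simp [List.getD, apply_eq_lim_of_le hN h, h]
  choose code hcode using hcode
  refine le_antisymm ?_ (mk_le_of_injective (f := const) (Function.LeftInverse.injective lim_const))
  calc #(AntitoneSeq A) ≤ #(List A × A) := mk_le_of_injective (f := code) fun c d h =>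
        Subtype.ext (funext fun n => by rw [hcode, hcode, h])
    _ = #A := by rw [mk_prod, mk_list_eq_mk, lift_id, mul_eq_self (aleph0_le_mk A)]

end Order

variable {A : Type*} [LinearOrder A] [TopologicalSpace A]

theorem continuous_apply (n : ℕ) : Continuous fun c : AntitoneSeq A => c.1 n :=
  (_root_.continuous_apply n).comp continuous_subtype_val

theorem tendsto_truncate (c : AntitoneSeq A) {b : A} (hb : ∀ n, b ≤ c.1 n) :
    Tendsto (c.truncate b hb) atTop (𝓝 c) := by
  rw [tendsto_subtype_rng, tendsto_pi_nhds]
  refine fun n => tendsto_const_nhds.congr' ?_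
  filter_upwards [eventually_gt_atTop n] with k hk
  exact (if_pos hk).symm

variable [DiscreteTopology A]

instance : TopologicalSpace.MetrizableSpace (AntitoneSeq A) :=
  have : TopologicalSpace.MetrizableSpace (ℕ → A) := inferInstance
  IsEmbedding.subtypeVal.metrizableSpace

theorem eventually_forall_le_apply_eq (c : AntitoneSeq A) (n : ℕ) :
    ∀ᶠ t in 𝓝 c, ∀ i ≤ n, t.1 i = c.1 i :=
  (eventually_all_finite (finite_Iic n)).2 fun i _ =>
    ((isOpen_discrete {c.1 i}).preimage (continuous_apply i)).mem_nhds rfl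

theorem isLocalRank_lim [WellFoundedLT A] : IsLocalRank (lim : AntitoneSeq A → A) where
  eventually_lt c := by
    obtain ⟨N, hN⟩ := c.exists_apply_eq_lim
    refine eventually_nhdsWithin_iff.2 ((c.eventually_forall_le_apply_eq N).mono fun t ht htc => ?_)
    refine ((t.lim_le N).trans_eq ((ht N le_rfl).trans hN)).lt_of_ne fun hlim => htc ?_
    have htN : t.1 N = t.lim := (ht N le_rfl).trans (hN.trans hlim.symm)
    refine Subtype.ext (funext fun n => ?_)
    rcases le_total n N with hn | hn
    · exact ht n hn
    · rw [apply_eq_lim_of_le htN hn, apply_eq_lim_of_le hN hn, hlim]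
  frequently_eq c b hb := by
    have hle (n : ℕ) : b ≤ c.1 n := hb.le.trans (c.lim_le n)
    have hne (k : ℕ) : c.truncate b hle k ≠ c := fun h =>
      hb.ne ((c.lim_truncate hle k).symm.trans (congrArg lim h))
    exact (tendsto_nhdsWithin_iff.2 ⟨c.tendsto_truncate hle, .of_forall hne⟩).frequently
      (.of_forall (c.lim_truncate hle))

end AntitoneSeq

/-- The graphs of `f` over the antitone sequences in `A`: the sheet over a constant sequence is
the whole graph of `f`, the sheet over any other sequence is the part of the graph over the positive
half-line. -/
@[ext]
structure GraphBundle (f : ℝ → ℝ) (A : Type*) [LinearOrder A] where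
  base : AntitoneSeq A
  x : ℝ
  mem_range_const_or_pos : base ∈ range AntitoneSeq.const ∨ 0 < x

namespace GraphBundle

section Basic

variable {f : ℝ → ℝ} {A : Type*} [LinearOrder A]

/-- The point of the graph with abscissa `x` in the full sheet over the constant sequence `a`. -/
def ofConst (f : ℝ → ℝ) (a : A) (x : ℝ) : GraphBundle f A := ⟨.const a, x, .inl (mem_range_self a)⟩

theorem ofConst_injective (f : ℝ → ℝ) (x : ℝ) :
    Function.Injective fun a : A => ofConst f a x := fun _ _ h =>
  congrFun (congrArg (fun m => m.base.1) h) 0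

instance [Infinite A] : Infinite (GraphBundle f A) := .of_injective _ (ofConst_injective f 0)

/-- The point of the graph with abscissa `x > 0` in the sheet over `c`. -/
def ofPos (f : ℝ → ℝ) (c : AntitoneSeq A) (x : ℝ) (hx : 0 < x) : GraphBundle f A := ⟨c, x, .inr hx⟩

/-- The point of `AntitoneSeq A × ℝ × ℝ` represented by a point of the graph bundle. -/
def toProd (m : GraphBundle f A) : AntitoneSeq A × ℝ × ℝ := (m.base, m.x, f m.x)

theorem toProd_injective : Function.Injective (toProd : GraphBundle f A → _) := fun _ _ h =>
  GraphBundle.ext (congrArg Prod.fst h) (congrArg (fun p => p.2.1) h)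

variable [TopologicalSpace A]

instance : TopologicalSpace (GraphBundle f A) := .induced toProd inferInstance

theorem isEmbedding_toProd : IsEmbedding (toProd : GraphBundle f A → _) :=
  ⟨⟨rfl⟩, toProd_injective⟩

theorem continuous_base : Continuous (base : GraphBundle f A → _) :=
  continuous_fst.comp isEmbedding_toProd.continuous

theorem continuous_x : Continuous (x : GraphBundle f A → _) :=
  (continuous_fst.comp continuous_snd).comp isEmbedding_toProd.continuous

theorem continuous_apply_x : Continuous fun m : GraphBundle f A => f m.x :=
  (continuous_snd.comp continuous_snd).comp isEmbedding_toProd.continuous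

theorem continuous_base_apply (n : ℕ) : Continuous fun m : GraphBundle f A => m.base.1 n :=
  (AntitoneSeq.continuous_apply n).comp continuous_base

theorem continuous_ofPos {x : ℝ} (hx : 0 < x) :
    Continuous fun c : AntitoneSeq A => ofPos f c x hx :=
  isEmbedding_toProd.continuous_iff.2 (Continuous.prodMk_left (x, f x))

theorem isPreconnected_fiber (hf : HasConnectedGraph f) (c : AntitoneSeq A) {J : Set ℝ}
    (hJ : J.OrdConnected) : IsPreconnected {m : GraphBundle f A | m.base = c ∧ m.x ∈ J} := by
  let D : Set ℝ := {x | c ∈ range AntitoneSeq.const ∨ 0 < x}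
  have hD : D.OrdConnected := IsUpperSet.ordConnected fun _ _ hxy => Or.imp_right hxy.trans_lt'
  have himage : toProd '' {m : GraphBundle f A | m.base = c ∧ m.x ∈ J} =
      Prod.mk c '' ((fun x => (x, f x)) '' (J ∩ D)) := by
    rw [image_image]
    apply Subset.antisymm
    · rintro _ ⟨m, ⟨rfl, hm⟩, rfl⟩
      exact ⟨m.x, ⟨hm, m.mem_range_const_or_pos⟩, rfl⟩
    · rintro _ ⟨x, ⟨hxJ, hxD⟩, rfl⟩
      exact ⟨⟨c, x, hxD⟩, ⟨rfl, hxJ⟩, rfl⟩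
  rw [← isEmbedding_toProd.isInducing.isPreconnected_image, himage]
  exact (hf (hJ.inter hD)).image _ (Continuous.prodMk_right c).continuousOn

theorem ordConnected_image_x {S : Set (GraphBundle f A)} (hS : IsPreconnected S) :
    (x '' S).OrdConnected :=
  (hS.image x continuous_x.continuousOn).ordConnected

theorem exists_apply_x_eq_of_isPreconnected (hf : StronglyDarboux f) {S : Set (GraphBundle f A)}
    (hS : IsPreconnected S) {m m' : GraphBundle f A} (hm : m ∈ S) (hm' : m' ∈ S)
    (hlt : m.x < m'.x) (y : ℝ) : ∃ p ∈ S, f p.x = y := by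
  obtain ⟨t, ht, rfl⟩ := hf hlt y
  obtain ⟨p, hp, rfl⟩ := (ordConnected_image_x hS).out (mem_image_of_mem x hm)
    (mem_image_of_mem x hm') (Ioo_subset_Icc_self ht)
  exact ⟨p, hp, rfl⟩

theorem exists_x_lt_of_mem_nhds (hf : StronglyDarboux f) {m : GraphBundle f A}
    {V : Set (GraphBundle f A)} (hV : V ∈ 𝓝 m) : ∃ p ∈ V, m.x < p.x := by
  rw [isEmbedding_toProd.nhds_eq_comap] at hV
  obtain ⟨W, hW, hWV⟩ := hV
  have hline : Continuous fun t : ℝ => (m.base, t, f m.x) := by fun_prop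
  obtain ⟨a, b, hab, hsub⟩ :=
    mem_nhds_iff_exists_Ioo_subset.1 (hline.continuousAt (x := m.x).preimage_mem_nhds hW)
  obtain ⟨t, ht, hft⟩ := hf hab.2 (f m.x)
  let p : GraphBundle f A := ⟨m.base, t, m.mem_range_const_or_pos.imp_right ht.1.trans'⟩
  have hp : p.toProd ∈ W := by
    have : (m.base, t, f m.x) ∈ W := hsub ⟨hab.1.trans ht.1, ht.2⟩
    rwa [← hft] at this
  exact ⟨p, hWV hp, ht.1⟩

end Basic

section DiscreteBase

variable {f : ℝ → ℝ} {A : Type*} [LinearOrder A] [TopologicalSpace A] [DiscreteTopology A]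

instance : TopologicalSpace.MetrizableSpace (GraphBundle f A) :=
  isEmbedding_toProd.metrizableSpace

theorem base_eq_of_isPreconnected {S : Set (GraphBundle f A)} (hS : IsPreconnected S)
    {m m' : GraphBundle f A} (hm : m ∈ S) (hm' : m' ∈ S) : m.base = m'.base :=
  (hS.image base continuous_base.continuousOn).subsingleton (mem_image_of_mem _ hm)
    (mem_image_of_mem _ hm')

end DiscreteBase

section Properties

variable {f : ℝ → ℝ} {A : Type} [LinearOrder A] [TopologicalSpace A]

theorem nowhereLocallyConnected (hf : StronglyDarboux f) :
    NowhereLocallyConnected (GraphBundle f A) := by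
  intro m
  have hopen : IsOpen {p : GraphBundle f A | f p.x < f m.x + 1} :=
    isOpen_lt continuous_apply_x continuous_const
  refine ⟨_, hopen.mem_nhds (lt_add_one (f m.x)), fun V hV hVconn hVU => ?_⟩
  obtain ⟨p, hp, hlt⟩ := exists_x_lt_of_mem_nhds hf hV
  obtain ⟨q, hq, hqf⟩ := exists_apply_x_eq_of_isPreconnected hf hVconn.isPreconnected
    (mem_of_mem_nhds hV) hp hlt (f m.x + 1)
  exact (hVU hq).ne hqf

theorem totallyPathDisconnected [DiscreteTopology A] (hf : StronglyDarboux f) :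
    TotallyPathDisconnected (GraphBundle f A) := by
  intro γ hγ s t
  have hrange : IsPreconnected (range γ) := isPreconnected_range hγ
  obtain ⟨y, hy⟩ := (isCompact_range (continuous_apply_x.comp hγ)).bddAbove
  have hle {p q : GraphBundle f A} (hp : p ∈ range γ) (hq : q ∈ range γ) : q.x ≤ p.x := by
    by_contra! hlt
    obtain ⟨_, ⟨u, rfl⟩, hu⟩ := exists_apply_x_eq_of_isPreconnected hf hrange hp hq hlt (y + 1)
    exact (lt_add_one y).not_ge (hu ▸ hy (mem_range_self u))
  have hs := mem_range_self (f := γ) s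
  have ht := mem_range_self (f := γ) t
  exact GraphBundle.ext (base_eq_of_isPreconnected hrange hs ht) ((hle ht hs).antisymm (hle hs ht))

end Properties

section EndFilter

variable {f : ℝ → ℝ} {A : Type*} [LinearOrder A]

/-- The basic neighbourhood of infinity in a graph bundle: the points at height more than `n` that
lie beyond `n` to the right, or beyond `-n` to the left in a sheet whose base sequence starts
in `B`. -/
def endNhd (f : ℝ → ℝ) (B : Set A) (n : ℕ) : Set (GraphBundle f A) :=
  {m | n < f m.x ∧ (n < m.x ∨ m.x < -n ∧ m.base.1 0 ∈ B)}

theorem endNhd_mono {B B' : Set A} {n n' : ℕ} (hB : B ⊆ B') (hn : n' ≤ n) :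
    endNhd f B n ⊆ endNhd f B' n' := by
  have hn : (n' : ℝ) ≤ n := Nat.cast_le.2 hn
  exact fun m hm => ⟨hn.trans_lt hm.1, hm.2.imp hn.trans_lt fun h =>
    ⟨h.1.trans_le (neg_le_neg hn), hB h.2⟩⟩

/-- The filter of neighbourhoods of infinity in a graph bundle whose left ends approach infinity
along the filter `G` of constant sequences. -/
def endFilter (f : ℝ → ℝ) (G : Filter A) : Filter (GraphBundle f A) where
  sets := {s | ∃ B ∈ G, ∃ n, endNhd f B n ⊆ s}
  univ_sets := ⟨Set.univ, univ_mem, 0, subset_univ _⟩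
  sets_of_superset := fun ⟨B, hB, n, hs⟩ hst => ⟨B, hB, n, hs.trans hst⟩
  inter_sets := fun ⟨B, hB, n, hs⟩ ⟨B', hB', n', hs'⟩ => ⟨B ∩ B', inter_mem hB hB', max n n',
    subset_inter ((endNhd_mono inter_subset_left (le_max_left n n')).trans hs)
      ((endNhd_mono inter_subset_right (le_max_right n n')).trans hs')⟩

theorem mem_endFilter_iff {G : Filter A} {s : Set (GraphBundle f A)} :
    s ∈ endFilter f G ↔ ∃ B ∈ G, ∃ n, endNhd f B n ⊆ s := Iff.rfl

theorem endNhd_mem_endFilter {G : Filter A} {B : Set A} (hB : B ∈ G) (n : ℕ) :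
    endNhd f B n ∈ endFilter f G := ⟨B, hB, n, Subset.rfl⟩

theorem hasBasis_endFilter (G : Filter A) : (endFilter f G).HasBasis
    (fun p : Set A × ℕ => p.1 ∈ G) fun p => endNhd f p.1 p.2 :=
  ⟨fun _ => by simp [mem_endFilter_iff]⟩

theorem iInter_endNhd (B : Set A) : ⋂ n, endNhd f B n = ∅ := by
  refine eq_empty_iff_forall_notMem.2 fun m hm => ?_
  obtain ⟨n, hn⟩ := exists_nat_gt (f m.x)
  exact hn.not_gt (mem_iInter.1 hm n).1

theorem compl_singleton_mem_endFilter (G : Filter A) (m : GraphBundle f A) :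
    {m}ᶜ ∈ endFilter f G := by
  obtain ⟨n, hn⟩ := exists_nat_gt (f m.x)
  refine mem_of_superset (endNhd_mem_endFilter univ_mem n) fun p hp => ?_
  rintro rfl
  exact hn.not_gt hp.1

theorem endNhd_univ_zero_subset {s : ℝ} (hs : f s < 0) :
    (endNhd f Set.univ 0 : Set (GraphBundle f A)) ⊆
      {m | 0 < m.x ∧ m.x < s} ∪ {m | m.x < 0 ∨ s < m.x} := by
  intro m ⟨hfm, hm⟩
  simp only [Nat.cast_zero, neg_zero, mem_univ, and_true] at hfm hm
  have hms : m.x ≠ s := fun h => (h ▸ hfm).not_gt hs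
  rcases hm with hpos | hneg
  · exact hms.lt_or_gt.imp (And.intro hpos) .inr
  · exact .inr (.inl hneg)

theorem setOf_neg_or_lt_mem_endFilter (G : Filter A) (s : ℝ) :
    {m | m.x < 0 ∨ s < m.x} ∈ endFilter f G := by
  obtain ⟨k, hk⟩ := exists_nat_gt s
  exact mem_of_superset (endNhd_mem_endFilter univ_mem k) fun m hm =>
    hm.2.symm.imp (fun h => h.1.trans_le (neg_nonpos.2 k.cast_nonneg)) hk.trans

theorem frequently_base_eq (hf : StronglyDarboux f) (G : Filter A) (c : AntitoneSeq A) :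
    ∃ᶠ m in endFilter f G, m.base = c := by
  refine (hasBasis_endFilter G).frequently_iff.2 fun {p} _ => ?_
  obtain ⟨t, ht, hft⟩ := hf (lt_add_one (p.2 : ℝ)) (p.2 + 1)
  exact ⟨ofPos f c t (p.2.cast_nonneg.trans_lt ht.1),
    ⟨(lt_add_one _).trans_eq hft.symm, .inl ht.1⟩, rfl⟩

theorem image_endNhd_inter_neg (hf : StronglyDarboux f) (B : Set A) (n : ℕ) :
    (fun m : GraphBundle f A => m.base.1 0) '' (endNhd f B n ∩ {m | m.x < 0}) = B := by
  apply Subset.antisymm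
  · rintro _ ⟨m, ⟨⟨-, hm | hm⟩, hneg⟩, rfl⟩
    · exact absurd hm (hneg.trans_le n.cast_nonneg).not_gt
    · exact hm.2
  · intro a ha
    obtain ⟨t, ht, hft⟩ := hf (sub_one_lt (-n : ℝ)) (n + 1)
    have hneg : t < 0 := ht.2.trans_le (neg_nonpos.2 n.cast_nonneg)
    exact ⟨ofConst f a t, ⟨⟨(lt_add_one _).trans_eq hft.symm, .inr ⟨ht.2, ha⟩⟩, hneg⟩, rfl⟩

theorem map_endFilter_inf_neg (hf : StronglyDarboux f) (G : Filter A) :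
    (endFilter f G ⊓ 𝓟 {m | m.x < 0}).map (fun m => m.base.1 0) = G := by
  ext s
  rw [(((hasBasis_endFilter G).inf_principal _).map _).mem_iff]
  simp only [image_endNhd_inter_neg hf]
  exact ⟨fun ⟨p, hp, hps⟩ => mem_of_superset hp hps, fun hs => ⟨(s, 0), hs, Subset.rfl⟩⟩

variable [TopologicalSpace A] [DiscreteTopology A]

theorem isOpen_endNhd (B : Set A) (n : ℕ) : IsOpen (endNhd f B n) :=
  (isOpen_lt continuous_const continuous_apply_x).inter
    ((isOpen_lt continuous_const continuous_x).union
      ((isOpen_lt continuous_x continuous_const).inter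
        ((isOpen_discrete B).preimage (continuous_base_apply 0))))

theorem closure_endNhd_succ_subset (B : Set A) (n : ℕ) :
    closure (endNhd f B (n + 1)) ⊆ endNhd f B n := by
  have hn : (n : ℝ) < (n + 1 : ℕ) := by simp
  let C : Set (GraphBundle f A) := {m | ((n + 1 : ℕ) : ℝ) ≤ f m.x} ∩
    ({m | ((n + 1 : ℕ) : ℝ) ≤ m.x} ∪ ({m | m.x ≤ -(n + 1 : ℕ)} ∩ {m | m.base.1 0 ∈ B}))
  have hC : IsClosed C :=
    (isClosed_le continuous_const continuous_apply_x).inter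
      ((isClosed_le continuous_const continuous_x).union
        ((isClosed_le continuous_x continuous_const).inter
          ((isClosed_discrete B).preimage (continuous_base_apply 0))))
  calc closure (endNhd f B (n + 1)) ⊆ C :=
        closure_minimal (fun m hm => ⟨hm.1.le, hm.2.imp le_of_lt (And.imp_left le_of_lt)⟩) hC
    _ ⊆ endNhd f B n := fun m hm => ⟨hn.trans_le hm.1,
        hm.2.imp hn.trans_le (And.imp_left fun h => h.trans_lt (neg_lt_neg hn))⟩

theorem regularFilter_endFilter (G : Filter A) : RegularFilter (endFilter f G) := fun _ hs =>
  let ⟨B, hB, n, hBs⟩ := hs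
  ⟨_, endNhd_mem_endFilter hB (n + 1), isOpen_endNhd B _,
    (closure_endNhd_succ_subset B n).trans hBs⟩

theorem interior_mem_endFilter (G : Filter A) :
    ∀ s ∈ endFilter f G, interior s ∈ endFilter f G :=
  fun _ => (regularFilter_endFilter G).interior_mem

end EndFilter

section Cardinal

variable {f : ℝ → ℝ} {A : Type u} [LinearOrder A]

theorem filterCharacter_endFilter (hf : StronglyDarboux f) {G : Filter A}
    (hG : ℵ₀ ≤ filterCharacter G) : filterCharacter (endFilter f G) = filterCharacter G := by
  refine le_antisymm ?_ ?_
  · obtain ⟨B, hB, hBcard⟩ := exists_hasBasis_mk_eq_filterCharacter G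
    have hbasis : (endFilter f G).HasBasis (fun _ : B × ℕ => True) fun p => endNhd f p.1.1 p.2 := by
      refine (hasBasis_endFilter G).to_hasBasis (fun p hp => ?_) fun p _ =>
        ⟨(p.1.1, p.2), hB.mem_of_mem p.1.2, Subset.rfl⟩
      obtain ⟨b, hb, hbp⟩ := hB.mem_iff.1 hp
      exact ⟨(⟨b, hb⟩, p.2), trivial, endNhd_mono hbp le_rfl⟩
    calc filterCharacter (endFilter f G) ≤ #(B × ℕ) := filterCharacter_le_of_hasBasis hbasis
      _ = filterCharacter G * ℵ₀ := by simp [hBcard]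
      _ = filterCharacter G := mul_aleph0_eq hG
  · calc filterCharacter G
        = filterCharacter ((endFilter f G ⊓ 𝓟 {m | m.x < 0}).map fun m => m.base.1 0) := by
          rw [map_endFilter_inf_neg hf]
      _ ≤ filterCharacter (endFilter f G ⊓ 𝓟 {m | m.x < 0}) := filterCharacter_map_le _ _
      _ ≤ filterCharacter (endFilter f G) := filterCharacter_inf_principal_le _ _

theorem mk_eq [WellFoundedLT A] (hA : 𝔠 ≤ #A) : #(GraphBundle f A) = #A := by
  have : Infinite A := infinite_iff.2 (aleph0_le_continuum.trans hA)
  refine le_antisymm ?_ (mk_le_of_injective (ofConst_injective f 0))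
  calc #(GraphBundle f A) ≤ #(AntitoneSeq A × ℝ) :=
        mk_le_of_injective (f := fun m => (m.base, m.x)) fun m m' h =>
          GraphBundle.ext (congrArg Prod.fst h) (congrArg Prod.snd h)
    _ = #A * 𝔠 := by rw [mk_prod, AntitoneSeq.mk_eq, mk_real, lift_continuum, lift_uzero]
    _ = #A := mul_eq_left (infinite_iff.1 this) hA continuum_ne_zero

end Cardinal

section LeftEnds

variable {f : ℝ → ℝ} {A : Type*} [LinearOrder A]

theorem lim_base_mem_of_mem_endNhd [WellFoundedLT A] {B : Set A} {n : ℕ} {m : GraphBundle f A}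
    (hm : m ∈ endNhd f B n) (hx : m.x ≤ n) : m.base.lim ∈ B := by
  obtain ⟨hneg, hB⟩ := hm.2.resolve_left hx.not_gt
  have hx0 : m.x < 0 := hneg.trans_le (neg_nonpos.2 n.cast_nonneg)
  obtain ⟨a, ha⟩ := m.mem_range_const_or_pos.resolve_right hx0.not_gt
  rw [← ha] at hB ⊢
  simpa using hB

theorem exists_ordConnected_ray (hf : StronglyDarboux f) {B : Set A} {a : A} (ha : a ∈ B) (n : ℕ)
    {s t : ℝ} (hst : s ≠ t) :
    ∃ K : Set ℝ, K.OrdConnected ∧ s ∈ K ∧ t ∉ K ∧ ∃ u ∈ K, ofConst f a u ∈ endNhd f B n := by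
  rcases hst.lt_or_gt with h | h
  · obtain ⟨u, hu, hfu⟩ := hf (sub_one_lt (min s (-n : ℝ))) (n + 1)
    exact ⟨Iio t, ordConnected_Iio, h, lt_irrefl t, u,
      (hu.2.trans_le (min_le_left s _)).trans h, (lt_add_one _).trans_eq hfu.symm,
      .inr ⟨hu.2.trans_le (min_le_right s _), ha⟩⟩
  · obtain ⟨u, hu, hfu⟩ := hf (lt_add_one (max s n)) (n + 1)
    exact ⟨Ioi t, ordConnected_Ioi, h, lt_irrefl t, u,
      h.trans ((le_max_left s _).trans_lt hu.1), (lt_add_one _).trans_eq hfu.symm,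
      .inl ((le_max_right s _).trans_lt hu.1)⟩

end LeftEnds

section Homeomorph

variable {f : ℝ → ℝ} {A : Type*} [LinearOrder A] [TopologicalSpace A] [DiscreteTopology A]

theorem x_lt_of_isPreconnected {S : Set (GraphBundle f A)} (hS : IsPreconnected S)
    {p q m : GraphBundle f A} (hp : p ∈ S) (hq : q ∉ S) (hbase : p.base = q.base)
    (hlt : p.x < q.x) (hm : m ∈ S) : m.x < q.x := by
  by_contra! hle
  obtain ⟨r, hr, hrx⟩ := (ordConnected_image_x hS).out (mem_image_of_mem GraphBundle.x hp)
    (mem_image_of_mem GraphBundle.x hm) ⟨hlt.le, hle⟩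
  have hrq : r = q := GraphBundle.ext ((base_eq_of_isPreconnected hS hr hp).trans hbase) hrx
  exact hq (hrq ▸ hr)

theorem exists_homeomorph_base (hf : HasConnectedGraph f) (g : GraphBundle f A ≃ₜ GraphBundle f A) :
    ∃ φ : AntitoneSeq A ≃ₜ AntitoneSeq A, ∀ m, (g m).base = φ m.base := by
  have hfiber (c : AntitoneSeq A) : IsPreconnected (base ⁻¹' {c} : Set (GraphBundle f A)) := by
    simpa [preimage, mem_singleton_iff] using isPreconnected_fiber hf c ordConnected_univ
  have hofPos : Continuous fun c : AntitoneSeq A => ofPos f c 1 one_pos := continuous_ofPos one_pos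
  exact exists_homeomorph_semiconj_of_isPreconnected_fiber continuous_base continuous_base
    hofPos hofPos (fun _ => rfl) (fun _ => rfl) hfiber hfiber g

theorem lim_base_apply_homeomorph [WellFoundedLT A] (hf : HasConnectedGraph f)
    (g : GraphBundle f A ≃ₜ GraphBundle f A) (m : GraphBundle f A) :
    (g m).base.lim = m.base.lim := by
  obtain ⟨φ, hφ⟩ := exists_homeomorph_base hf g
  rw [hφ, AntitoneSeq.isLocalRank_lim.apply_homeomorph AntitoneSeq.isLocalRank_lim φ]

theorem exists_mem_endNhd_apply_x_lt_one (hf : GraphMeetsClosed f)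
    (g : GraphBundle f A ≃ₜ GraphBundle f A) {B : Set A} {a : A} (ha : a ∈ B) (n : ℕ) :
    ∃ t, ofConst f a t ∈ endNhd f B n ∧ (g (ofConst f a t)).x < 1 := by
  obtain ⟨φ, hφ⟩ := exists_homeomorph_base hf.hasConnectedGraph g
  let p := ofPos f (φ (.const a)) (1 / 2) one_half_pos
  let q := ofPos f (φ (.const a)) 1 one_pos
  have hbase (m : GraphBundle f A) (hm : m.base = φ (.const a)) : (g.symm m).base = .const a := by
    rw [← φ.injective.eq_iff, ← hφ, g.apply_symm_apply, hm]
  have hpq : (g.symm p).x ≠ (g.symm q).x := fun h => by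
    have heq : p = q :=
      g.symm.injective (GraphBundle.ext ((hbase p rfl).trans (hbase q rfl).symm) h)
    exact one_half_lt_one.ne (congrArg GraphBundle.x heq)
  obtain ⟨K, hK, hpK, hqK, t, htK, ht⟩ := exists_ordConnected_ray hf.stronglyDarboux ha n hpq
  have hS : IsPreconnected (g '' {m | m.base = .const a ∧ m.x ∈ K}) :=
    (isPreconnected_fiber hf.hasConnectedGraph _ hK).image g g.continuous.continuousOn
  refine ⟨t, ht, x_lt_of_isPreconnected hS (p := p) (q := q) ?_ ?_ rfl one_half_lt_one ?_⟩
  · exact ⟨g.symm p, ⟨hbase p rfl, hpK⟩, g.apply_symm_apply p⟩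
  · rintro ⟨m, hm, hmq⟩
    exact hqK (g.eq_symm_apply.2 hmq ▸ hm.2)
  · exact mem_image_of_mem g ⟨rfl, htK⟩

theorem le_of_tendsto_endFilter [WellFoundedLT A] (hf : GraphMeetsClosed f)
    (g : GraphBundle f A ≃ₜ GraphBundle f A) {G G' : Filter A}
    (hg : Tendsto g (endFilter f G) (endFilter f G')) : G ≤ G' := by
  intro B hB
  obtain ⟨B', hB', n, hn⟩ := mem_endFilter_iff.1 (hg (endNhd_mem_endFilter hB 1))
  refine mem_of_superset hB' fun a ha => ?_
  obtain ⟨t, ht, htx⟩ := exists_mem_endNhd_apply_x_lt_one hf g ha n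
  have hlim := lim_base_mem_of_mem_endNhd (hn ht) (by simpa using htx.le)
  rw [lim_base_apply_homeomorph hf.hasConnectedGraph] at hlim
  simpa [ofConst] using hlim

end Homeomorph

end GraphBundle

/-- The graph bundle with a point at infinity, whose neighbourhoods contain the right ends of all
sheets and the left ends of the full sheets prescribed by the filter `G`. -/
abbrev GraphExtension (f : ℝ → ℝ) {A : Type*} [LinearOrder A] (G : Filter A) : Type _ :=
  FilterExtension (GraphBundle.endFilter f G)

namespace GraphExtension

open GraphBundle

section Properties

variable {f : ℝ → ℝ} {A : Type} [LinearOrder A] {G : Filter A}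

theorem mk_eq [WellFoundedLT A] (hA : 𝔠 ≤ #A) : #(GraphExtension f G) = #A := by
  have : Infinite A := infinite_iff.2 (aleph0_le_continuum.trans hA)
  rw [FilterExtension.mk_eq, GraphBundle.mk_eq hA]

variable [TopologicalSpace A]

theorem connectedSpace (hf : GraphMeetsClosed f) :
    ConnectedSpace (GraphExtension f G) where
  toPreconnectedSpace := FilterExtension.preconnectedSpace fun m =>
    ⟨{p | p.base = m.base},
      by simpa using isPreconnected_fiber hf.hasConnectedGraph m.base ordConnected_univ,
      rfl, frequently_base_eq hf.stronglyDarboux G m.base⟩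
  toNonempty := ⟨.infty⟩

variable [DiscreteTopology A]

theorem totallyPathDisconnected (hf : StronglyDarboux f) :
    TotallyPathDisconnected (GraphExtension f G) :=
  FilterExtension.totallyPathDisconnected (GraphBundle.totallyPathDisconnected hf)
    (compl_singleton_mem_endFilter G)

theorem almostMetrizable : AlmostMetrizable (GraphExtension f G) :=
  FilterExtension.almostMetrizable (regularFilter_endFilter G)
    ⟨endNhd f Set.univ, endNhd_mem_endFilter univ_mem, iInter_endNhd Set.univ⟩

theorem not_subset_insert_infty_endNhd [Nonempty A] (hf : StronglyDarboux f)
    {V : Set (GraphExtension f G)} (hV : V ∈ 𝓝 .infty) (hVconn : IsConnected V) :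
    ¬ V ⊆ insert .infty (.of '' endNhd f Set.univ 0) := by
  intro hVU
  obtain ⟨⟨B, n⟩, -, hBV⟩ := (FilterExtension.hasBasis_nhds_infty (interior_mem_endFilter G)
    (hasBasis_endFilter G)).mem_iff.1 hV
  obtain ⟨t, ht, hft⟩ := hf (lt_add_one (n : ℝ)) (n + 1)
  obtain ⟨s, hs, hfs⟩ := hf (lt_add_one t) (-1)
  -- `V` misses the levels `0` and `s` of the coordinate `x`, so the strip in between splits `V`.
  let P : Set (GraphBundle f A) := {m | 0 < m.x ∧ m.x < s}
  let Q : Set (GraphBundle f A) := {m | m.x < 0 ∨ s < m.x}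
  have hP : IsOpen P :=
    (isOpen_lt continuous_const continuous_x).inter (isOpen_lt continuous_x continuous_const)
  have hQ : IsOpen Q :=
    (isOpen_lt continuous_x continuous_const).union (isOpen_lt continuous_const continuous_x)
  have hcov : V ⊆ .of '' P ∪ insert .infty (.of '' Q) := by
    refine hVU.trans (insert_subset (.inr (mem_insert _ _)) (image_subset_iff.2 fun m hm => ?_))
    exact (endNhd_univ_zero_subset (hfs.trans_lt neg_one_lt_zero) hm).imp (mem_image_of_mem _)
      fun h => .inr (mem_image_of_mem _ h)
  let m : GraphBundle f A := ofConst f (Classical.arbitrary A) t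
  have hmP : m ∈ P := ⟨n.cast_nonneg.trans_lt ht.1, hs.1⟩
  have hmV : .of m ∈ V :=
    hBV (.inr (mem_image_of_mem _ ⟨(lt_add_one (n : ℝ)).trans_eq hft.symm, .inl ht.1⟩))
  obtain ⟨_, -, ⟨p, hpP, rfl⟩, hpQ⟩ := hVconn.isPreconnected _ _
    (FilterExtension.isOpenMap_of _ hP)
    (FilterExtension.isOpen_insert_infty hQ (setOf_neg_or_lt_mem_endFilter G s)) hcov
    ⟨_, hmV, mem_image_of_mem _ hmP⟩ ⟨_, mem_of_mem_nhds hV, mem_insert _ _⟩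
  have hpQ : p ∈ Q := by simpa using hpQ
  exact hpQ.elim hpP.1.not_gt hpP.2.not_gt

theorem nowhereLocallyConnected [Nonempty A] (hf : StronglyDarboux f) :
    NowhereLocallyConnected (GraphExtension f G) :=
  FilterExtension.nowhereLocallyConnected (GraphBundle.nowhereLocallyConnected hf)
    ⟨_, FilterExtension.insert_infty_mem_nhds (interior_mem_endFilter G)
      (endNhd_mem_endFilter univ_mem 0), fun _ => not_subset_insert_infty_endNhd hf⟩

theorem tweight_eq [WellFoundedLT A] (hf : StronglyDarboux f) (hA : 𝔠 ≤ #A)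
    (hG : #A ≤ filterCharacter G) : tweight (GraphExtension f G) = filterCharacter G := by
  have : Infinite A := infinite_iff.2 (aleph0_le_continuum.trans hA)
  have hchar : filterCharacter (endFilter f G) = filterCharacter G :=
    filterCharacter_endFilter hf ((aleph0_le_continuum.trans hA).trans hG)
  rw [FilterExtension.tweight_eq_filterCharacter (interior_mem_endFilter G)
    (by rwa [GraphBundle.mk_eq hA, hchar]), hchar]

end Properties

section Recovery

variable {f : ℝ → ℝ} {A : Type*} [LinearOrder A] [WellFoundedLT A] [TopologicalSpace A]
  [DiscreteTopology A] {G G' : Filter A}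

theorem eq_of_homeomorph (hf : GraphMeetsClosed f) (hG : ℵ₀ < filterCharacter G)
    (h : GraphExtension f G ≃ₜ GraphExtension f G') : G = G' := by
  have hchar : ¬ (endFilter f G).IsCountablyGenerated := fun _ => by
    refine (filterCharacter_le_aleph0 (endFilter f G)).not_gt ?_
    rwa [filterCharacter_endFilter hf.stronglyDarboux hG.le]
  obtain ⟨g, hg, hgsymm⟩ := FilterExtension.exists_homeomorph_of_apply_infty
    (interior_mem_endFilter G) (interior_mem_endFilter G') h
    (FilterExtension.apply_infty (interior_mem_endFilter G) hchar h)
  exact (le_of_tendsto_endFilter hf g hg).antisymm (le_of_tendsto_endFilter hf g.symm hgsymm)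

end Recovery

end GraphExtension

/-- Theorem 4: if `𝔠 ≤ κ ≤ λ ≤ 2 ^ κ`, then there exist `2 ^ λ` mutually
non-homeomorphic connected, totally pathwise disconnected, nowhere locally connected,
almost metrizable spaces of cardinality `κ` and weight `λ`. -/
theorem stmt14 (κ lam : Cardinal) (h0 : Cardinal.continuum ≤ κ)
    (h1 : κ ≤ lam) (h2 : lam ≤ 2 ^ κ) :
    ExistsNonHomeoFamily (2 ^ lam) (fun X t =>
      letI := t
      ConnectedSpace X ∧ TotallyPathDisconnected X ∧ NowhereLocallyConnected X ∧
        AlmostMetrizable X ∧ #X = κ ∧ tweight X = lam) := by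
  obtain ⟨A, rfl⟩ : ∃ A : Type, #A = κ := ⟨κ.out, mk_out κ⟩
  obtain ⟨J, rfl⟩ : ∃ J : Type, #J = lam := ⟨lam.out, mk_out lam⟩
  obtain ⟨_, _⟩ := exists_wellFoundedLT A
  let _ : TopologicalSpace A := ⊥
  have : DiscreteTopology A := ⟨rfl⟩
  have : Infinite A := infinite_iff.2 (aleph0_le_continuum.trans h0)
  have hJ : ℵ₀ < #J := aleph0_lt_continuum.trans_le (h0.trans h1)
  obtain ⟨f, hf⟩ := exists_graphMeetsClosed
  obtain ⟨I, hI⟩ := exists_independentFamily h2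
  have hchar := hI.filterCharacter_patternFilter hJ
  refine ⟨Set J, fun T => GraphExtension f (patternFilter I T), fun T => inferInstance, mk_set,
    fun T => ?_, fun T T' hne => ⟨fun h => hne (hI.patternFilter_injective ?_)⟩⟩
  · exact ⟨GraphExtension.connectedSpace hf,
      GraphExtension.totallyPathDisconnected hf.stronglyDarboux,
      GraphExtension.nowhereLocallyConnected hf.stronglyDarboux, GraphExtension.almostMetrizable,
      GraphExtension.mk_eq h0, (GraphExtension.tweight_eq hf.stronglyDarboux h0
        (h1.trans_eq (hchar T).symm)).trans (hchar T)⟩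
  · exact GraphExtension.eq_of_homeomorph hf (hJ.trans_eq (hchar T).symm) h
end
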